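/- arXiv:2411.08009 — 4 statements merged into one kernel-verified Lean document; each statement's English description precedes it below -/
import Mathlib

section
/- Suppose J ⊆ K ⊆ L are simplicial complexes (J a subcomplex of K, K a subcomplex of L) with J flag. Then the relative barycentric subdivision b(L, J) is an iterated edge subdivision of the relative barycentric subdivision b(L, K). -/
/-!
A *building set* of `L` is a set `B` of faces that contains all vertices and is closed under those
unions of two intersecting members that are faces of `L`. Its *nested set complex* `nested L B` has
vertex set `B`. The relative barycentric subdivision `relbary L K` is the nested set complex of the
building set `relBuilding L K` consisting of the vertices of `L` and the faces outside `K`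
(`relbary_eq_nested`).

If `S` and `T` belong to `B`, the face `S ∪ T` does not, and `insert (S ∪ T) B` is again a building
set, then `S` and `T` are the only maximal members of `B` inside `S ∪ T`, and passing from `B` to
`insert (S ∪ T) B` amounts to subdividing the edge `{S, T}` of the nested set complex
(`nested_insert`).

So it suffices to go from `relBuilding L K` to `relBuilding L J` by adding such unions one at a time.
Suppose some face outside `J` is still missing, and let `σ` be a minimal one. Either `σ` minus some
vertex `y` is a face outside `J`, which then belongs to `B`, or all proper faces of `σ` are in `J`
and flagness forces `σ` to be an edge; in both cases `σ` is a union of two members of `B`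
(`exists_union`). Among all missing faces outside `J` that are unions `S ∪ T` of two members of `B`,
a maximal one can be added: if `X ∈ B` meets `S`, say, then `X ∪ S ∈ B`, so `(X ∪ S) ∪ T` is again
such a union and hence, by maximality, is either `S ∪ T` or already in `B` (`exists_insert`).
-/

open scoped Classical

noncomputable section

/-- A collection of finite subsets of the vertex type `V` (the faces). -/
abbrev SCplx (V : Type) : Type := Set (Finset V)

/-- `L` is an abstract simplicial complex: every face is nonempty, and faces are
closed under passing to nonempty subsets. -/
def IsComplex {V : Type} (L : SCplx V) : Prop :=
  (∀ s ∈ L, s.Nonempty) ∧ ∀ s ∈ L, ∀ t : Finset V, t ⊆ s → t.Nonempty → t ∈ L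

/-- The vertex set of a complex. -/
def verts {V : Type} (L : SCplx V) : Set V := {v | ({v} : Finset V) ∈ L}

/-- `e` is an edge of `L`: a face with two elements. -/
def IsEdge {V : Type} (L : SCplx V) (e : Finset V) : Prop := e ∈ L ∧ e.card = 2

/-- The link of a simplex `σ`. -/
def link {V : Type} (L : SCplx V) (σ : Finset V) : SCplx V :=
  {τ | τ ∈ L ∧ Disjoint τ σ ∧ τ ∪ σ ∈ L}

/-- `L` is flag: every nonempty finite set of vertices which are pairwise joined
by edges of `L` is a face of `L`. -/
def FlagCplx {V : Type} (L : SCplx V) : Prop :=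
  ∀ s : Finset V, s.Nonempty → (∀ v ∈ s, ({v} : Finset V) ∈ L) →
    (∀ u ∈ s, ∀ v ∈ s, u ≠ v → ({u, v} : Finset V) ∈ L) → s ∈ L

/-- Simplicial isomorphism: a bijection of vertex sets carrying simplices to
simplices in both directions. -/
def Isom {V W : Type} (L : SCplx V) (L' : SCplx W) : Prop :=
  ∃ f : V → W, Set.BijOn f (verts L) (verts L') ∧
    (∀ s ∈ L, s.image f ∈ L') ∧ (∀ t ∈ L', ∃ s ∈ L, s.image f = t)

/-- Edge subdivision of `L` along the edge `e`; the new vertex `v_e` is `none`. -/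
def subdiv {V : Type} (L : SCplx V) (e : Finset V) : SCplx (Option V) :=
  {σ | ∃ τ ∈ L, ¬ e ⊆ τ ∧ σ = τ.image some} ∪
    {σ | ∃ τ f : Finset V, (τ = ∅ ∨ τ ∈ link L e) ∧ f ⊂ e ∧
      σ = insert none ((τ ∪ f).image some)}

/-- `IterSub L L'` : `L'` is an iterated edge subdivision of `L`, that is, there is
a chain `L = L₀, L₁, …, L_m` with `L_{i+1} = Sub_{e_i}(L_i)` and `L_m ≅ L'`. -/
inductive IterSub : {V : Type} → SCplx V → {W : Type} → SCplx W → Prop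
  | iso {V W : Type} {L : SCplx V} {L' : SCplx W} : Isom L L' → IterSub L L'
  | step {V W : Type} {L : SCplx V} {L' : SCplx W} (e : Finset V) :
      IsEdge L e → IterSub (subdiv L e) L' → IterSub L L'

/-- The relative barycentric subdivision `b(L, K)`: vertices are the simplices of
`L ∖ K` (barycenters) together with the vertices of `K` (as singleton simplices);
faces are spanned by chains of simplices of `L` with at most one member in `K`. -/
def relbary {V : Type} (L K : SCplx V) : SCplx (Finset V) :=
  {S | S.Nonempty ∧ ∃ (τ : Finset V) (c : Finset (Finset V)),
    (τ = ∅ ∨ τ ∈ K) ∧ (∀ σ ∈ c, σ ∈ L ∧ σ ∉ K) ∧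
    (∀ σ ∈ c, ∀ σ' ∈ c, σ ⊆ σ' ∨ σ' ⊆ σ) ∧ (∀ σ ∈ c, τ ⊆ σ) ∧
    S = τ.image (fun v => ({v} : Finset V)) ∪ c}

/-- The join of two complexes on disjoint vertex sets. -/
def join {V W : Type} (L₁ : SCplx V) (L₂ : SCplx W) : SCplx (V ⊕ W) :=
  {s | ∃ (s₁ : Finset V) (s₂ : Finset W), (s₁ = ∅ ∨ s₁ ∈ L₁) ∧ (s₂ = ∅ ∨ s₂ ∈ L₂) ∧
    (s₁.Nonempty ∨ s₂.Nonempty) ∧ s = s₁.image Sum.inl ∪ s₂.image Sum.inr}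

/-- The two-point complex `S⁰` (two vertices, no edge). -/
def S0 : SCplx Bool := {s | s = {true} ∨ s = {false}}

/-- The suspension of `L` : the join of `L` with `S⁰`. -/
def susp {V : Type} (L : SCplx V) : SCplx (V ⊕ Bool) := join L S0

/-- The cone on `L`, with cone vertex `none`. -/
def cone {V : Type} (L : SCplx V) : SCplx (Option V) :=
  {σ | ∃ τ : Finset V, (τ = ∅ ∨ τ ∈ L) ∧
    ((τ.Nonempty ∧ σ = τ.image some) ∨ σ = insert none (τ.image some))}

/-- The boundary of the `n`-simplex : all nonempty proper subsets of an
`(n+1)`-element vertex set. -/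
def bdSimplex (n : ℕ) : SCplx (Fin (n + 1)) :=
  {s | s.Nonempty ∧ s ≠ Finset.univ}

/-- The boundary complex `∂σ` of a simplex `σ` : proper nonempty subsets of `σ`. -/
def bdry {V : Type} (σ : Finset V) : SCplx V := {t | t ⊂ σ ∧ t.Nonempty}

/-- The boundary of the `n`-octahedron, i.e. the `n`-fold join `S⁰ * ⋯ * S⁰`. -/
def octa (n : ℕ) : SCplx (Fin n × Bool) :=
  {s | s.Nonempty ∧
    ∀ i : Fin n, ¬ (((i, true) : Fin n × Bool) ∈ s ∧ ((i, false) : Fin n × Bool) ∈ s)}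

end

/-! ### Edge subdivision, up to renaming of vertices -/

/-- Edge subdivision of `N` at `e` carried out inside the vertex type of `N`, with new vertex `a`.
A face through `a` is described by a face `p ⊇ e` of `N` containing all its other vertices. -/
def subdivAt {X : Type} (N : SCplx X) (e : Finset X) (a : X) : SCplx X :=
  {u | (u ∈ N ∧ ¬ e ⊆ u) ∨ (a ∈ u ∧ ¬ e ⊆ u ∧ ∃ p ∈ N, e ⊆ p ∧ ∀ x ∈ u, x = a ∨ x ∈ p)}

/-- `f` renames the vertices of the complex `M` injectively, and turns `M` into `N`. -/
structure Renames {W X : Type} (f : W → X) (M : SCplx W) (N : SCplx X) : Prop where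
  cplx : IsComplex M
  inj : Set.InjOn f (verts M)
  mem_iff : ∀ t, t ∈ N ↔ ∃ s ∈ M, s.image f = t

theorem mem_verts_of_mem {W : Type} {M : SCplx W} (hM : IsComplex M) {s : Finset W} (hs : s ∈ M)
    {v : W} (hv : v ∈ s) : v ∈ verts M :=
  hM.2 s hs {v} (by simpa using hv) (by simp)

theorem Renames.card_image {W X : Type} {f : W → X} {M : SCplx W} {N : SCplx X}
    (h : Renames f M N) {s : Finset W} (hs : s ∈ M) : (s.image f).card = s.card :=
  Finset.card_image_of_injOn fun _ hv _ hw hvw =>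
    h.inj (mem_verts_of_mem h.cplx hs hv) (mem_verts_of_mem h.cplx hs hw) hvw

theorem Renames.isom {W X : Type} {f : W → X} {M : SCplx W} {N : SCplx X} (h : Renames f M N) :
    Isom M N := by
  refine ⟨f, ⟨?_, h.inj, ?_⟩, fun s hs => (h.mem_iff _).2 ⟨s, hs, rfl⟩, fun t ht => (h.mem_iff t).1 ht⟩
  · intro v hv
    exact (h.mem_iff _).2 ⟨{v}, hv, by simp⟩
  · intro x hx
    obtain ⟨s, hs, hsx⟩ := (h.mem_iff _).1 hx
    obtain ⟨v, hv⟩ := h.cplx.1 s hs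
    refine ⟨v, mem_verts_of_mem h.cplx hs hv, ?_⟩
    have : f v ∈ s.image f := Finset.mem_image_of_mem f hv
    rw [hsx] at this
    simpa using this

theorem mem_subdiv_iff {W : Type} {M : SCplx W} (hM : IsComplex M) {e : Finset W} (he : e ∈ M)
    (s : Finset (Option W)) :
    s ∈ subdiv M e ↔ (∃ τ ∈ M, ¬ e ⊆ τ ∧ s = τ.image some) ∨
      (none ∈ s ∧ (∃ v ∈ e, some v ∉ s) ∧ ∃ p ∈ M, e ⊆ p ∧ ∀ v, some v ∈ s → v ∈ p) := by
  refine or_congr Iff.rfl ⟨?_, ?_⟩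
  · rintro ⟨τ, f, hτ, hf, rfl⟩
    obtain ⟨v, hve, hvf⟩ := Finset.exists_of_ssubset hf
    refine ⟨by simp, ⟨v, hve, ?_⟩, τ ∪ e, ?_, Finset.subset_union_right, ?_⟩
    · have : v ∉ τ := by
        rcases hτ with rfl | hτ
        · simp
        · exact fun h => Finset.disjoint_left.1 hτ.2.1 h hve
      simp [this, hvf]
    · rcases hτ with rfl | hτ
      · simpa using he
      · exact hτ.2.2
    · intro w hw
      have hw : w ∈ τ ∨ w ∈ f := by simpa using hw
      exact Finset.mem_union.2 (hw.imp id (fun h => hf.1 h))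
  · rintro ⟨hn, ⟨v, hve, hvs⟩, p, hp, hep, hsp⟩
    refine ⟨p.filter (fun w => some w ∈ s ∧ w ∉ e), e.filter (fun w => some w ∈ s), ?_, ?_, ?_⟩
    · rcases Finset.eq_empty_or_nonempty (p.filter (fun w => some w ∈ s ∧ w ∉ e)) with h0 | h0
      · exact Or.inl h0
      · refine Or.inr ⟨hM.2 p hp _ (Finset.filter_subset _ _) h0, ?_, hM.2 p hp _ ?_ ?_⟩
        · rw [Finset.disjoint_left]
          intro w hw
          exact (Finset.mem_filter.1 hw).2.2
        · exact Finset.union_subset (Finset.filter_subset _ _) hep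
        · exact ⟨v, Finset.mem_union_right _ hve⟩
    · refine ⟨Finset.filter_subset _ _, fun h => hvs (Finset.mem_filter.1 (h hve)).2⟩
    · ext o
      cases o with
      | none => simpa using hn
      | some w =>
        have := fun h : some w ∈ s => hsp w h
        simp only [Finset.mem_insert, reduceCtorEq, Finset.mem_image, Finset.mem_union,
          Finset.mem_filter, Option.some.injEq, exists_eq_right, false_or]
        tauto

theorem isComplex_subdiv {W : Type} {M : SCplx W} (hM : IsComplex M) {e : Finset W} (he : e ∈ M) :
    IsComplex (subdiv M e) := by
  refine ⟨fun s hs => ?_, fun s hs t hts htn => ?_⟩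
  · rcases (mem_subdiv_iff hM he s).1 hs with ⟨τ, hτ, -, rfl⟩ | ⟨hn, -⟩
    · exact (hM.1 τ hτ).image _
    · exact ⟨_, hn⟩
  · rw [mem_subdiv_iff hM he] at hs ⊢
    -- a set of old vertices lying in a face `p` and missing a vertex of `e` is an old face
    have key : ∀ p ∈ M, none ∉ t → (∃ v ∈ e, some v ∉ t) → (∀ v, some v ∈ t → v ∈ p) →
        ∃ τ ∈ M, ¬ e ⊆ τ ∧ t = τ.image some := by
      rintro p hp hn ⟨v, hve, hvt⟩ htp
      have ht : t = (p.filter (fun w => some w ∈ t)).image some := by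
        ext o
        cases o with
        | none => simpa using hn
        | some w => simpa using htp w
      refine ⟨p.filter (fun w => some w ∈ t), hM.2 p hp _ (Finset.filter_subset _ _) ?_, ?_, ht⟩
      · rw [ht] at htn
        exact htn.of_image
      · exact fun h => hvt (Finset.mem_filter.1 (h hve)).2
    rcases hs with ⟨τ, hτ, hne, rfl⟩ | ⟨hn, ⟨v, hve, hvs⟩, p, hp, hep, hsp⟩
    · left
      obtain ⟨v, hve, hvτ⟩ := Finset.not_subset.1 hne
      refine key τ hτ (fun h => by simpa using hts h) ⟨v, hve, fun h => hvτ ?_⟩ fun w hw => ?_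
      · simpa using hts h
      · simpa using hts hw
    · by_cases hnt : none ∈ t
      · exact Or.inr ⟨hnt, ⟨v, hve, fun h => hvs (hts h)⟩, p, hp, hep, fun w hw => hsp w (hts hw)⟩
      · exact Or.inl (key p hp hnt ⟨v, hve, fun h => hvs (hts h)⟩ fun w hw => hsp w (hts hw))

theorem mem_verts_of_some {W : Type} {M : SCplx W} (hM : IsComplex M) {e : Finset W} (he : e ∈ M)
    {v : W} (hv : some v ∈ verts (subdiv M e)) : v ∈ verts M := by
  rcases (mem_subdiv_iff hM he _).1 hv with ⟨τ, hτ, -, h⟩ | ⟨hn, -⟩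
  · have : some v ∈ τ.image some := h ▸ Finset.mem_singleton_self _
    exact mem_verts_of_mem hM hτ (by simpa using this)
  · simp at hn

/-- Edge subdivision is compatible with renaming of vertices. -/
theorem Renames.subdiv {W X : Type} {f : W → X} {M : SCplx W} {N : SCplx X} (h : Renames f M N)
    {e : Finset W} (he : e ∈ M) {e' : Finset X} (hee : e.image f = e') {a : X}
    (ha : ∀ v ∈ verts M, f v ≠ a) :
    Renames (fun o : Option W => o.elim a f) (subdiv M e) (subdivAt N e' a) := by
  have hM := h.cplx
  have hev : ∀ v ∈ e, v ∈ verts M := fun v hv => mem_verts_of_mem hM he hv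
  have hmem : ∀ s ∈ M, ∀ v ∈ verts M, f v ∈ s.image f → v ∈ s := by
    intro s hs v hv hfv
    obtain ⟨w, hw, hwv⟩ := Finset.mem_image.1 hfv
    rwa [← h.inj (mem_verts_of_mem hM hs hw) hv hwv]
  have hfe : ∀ v ∈ e, f v ∈ e' := fun v hv => hee ▸ Finset.mem_image_of_mem f hv
  refine ⟨isComplex_subdiv hM he, ?_, fun u => ⟨?_, ?_⟩⟩
  · rintro (_ | v) hv (_ | w) hw hvw
    · rfl
    · exact absurd hvw.symm (ha w (mem_verts_of_some hM he hw))
    · exact absurd hvw (ha v (mem_verts_of_some hM he hv))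
    · exact congrArg some (h.inj (mem_verts_of_some hM he hv) (mem_verts_of_some hM he hw) hvw)
  · rintro (⟨hu, heu⟩ | ⟨hau, heu, p, hp, hep, hup⟩)
    · obtain ⟨s, hs, rfl⟩ := (h.mem_iff u).1 hu
      refine ⟨s.image some, (mem_subdiv_iff hM he _).2 (Or.inl ⟨s, hs, fun hes => heu ?_, rfl⟩), ?_⟩
      · rw [← hee]
        exact Finset.image_subset_image hes
      · ext x
        simp
    · obtain ⟨q, hq, rfl⟩ := (h.mem_iff p).1 hp
      refine ⟨insert none ((q.filter (fun v => f v ∈ u)).image some),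
        (mem_subdiv_iff hM he _).2 (Or.inr ⟨by simp, ?_, q, hq, ?_, ?_⟩), ?_⟩
      · obtain ⟨x, hxe, hxu⟩ := Finset.not_subset.1 heu
        rw [← hee] at hxe
        obtain ⟨v, hv, rfl⟩ := Finset.mem_image.1 hxe
        exact ⟨v, hv, by simp [hxu]⟩
      · exact fun v hv => hmem q hq v (hev v hv) (hep (hfe v hv))
      · intro v hv
        have : v ∈ q ∧ f v ∈ u := by simpa using hv
        exact this.1
      · ext x
        simp only [Finset.mem_image, Finset.mem_insert, Finset.mem_filter]
        constructor
        · rintro ⟨o, rfl | ⟨v, hv, rfl⟩, rfl⟩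
          · exact hau
          · exact hv.2
        · intro hx
          rcases hup x hx with rfl | hxp
          · exact ⟨none, Or.inl rfl, rfl⟩
          · obtain ⟨v, hv, rfl⟩ := Finset.mem_image.1 hxp
            exact ⟨some v, Or.inr ⟨v, ⟨hv, hx⟩, rfl⟩, rfl⟩
  · rintro ⟨s, hs, rfl⟩
    rcases (mem_subdiv_iff hM he _).1 hs with ⟨τ, hτ, hne, rfl⟩ | ⟨hn, ⟨v, hve, hvs⟩, p, hp, hep, hsp⟩
    · left
      have : (τ.image some).image (fun o : Option W => o.elim a f) = τ.image f := by
        ext x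
        simp
      rw [this]
      refine ⟨(h.mem_iff _).2 ⟨τ, hτ, rfl⟩, fun hsub => hne fun v hv => ?_⟩
      exact hmem τ hτ v (hev v hv) (hsub (hfe v hv))
    · right
      refine ⟨Finset.mem_image.2 ⟨none, hn, rfl⟩, fun hsub => ?_, p.image f,
        (h.mem_iff _).2 ⟨p, hp, rfl⟩, ?_, ?_⟩
      · obtain ⟨o, ho, hov⟩ := Finset.mem_image.1 (hsub (hfe v hve))
        cases o with
        | none => exact ha v (hev v hve) hov.symm
        | some w =>
          have : w = v := h.inj (mem_verts_of_mem hM hp (hsp w ho)) (hev v hve) hov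
          exact hvs (this ▸ ho)
      · rw [← hee]
        exact Finset.image_subset_image hep
      · intro x hx
        obtain ⟨o, ho, rfl⟩ := Finset.mem_image.1 hx
        cases o with
        | none => exact Or.inl rfl
        | some w => exact Or.inr (Finset.mem_image_of_mem f (hsp w ho))

/-! ### Building sets and nested set complexes -/

/-- `B` is a building set of the complex `L`: it consists of faces, contains all vertices, and is
closed under those unions of two intersecting members that are faces of `L`. -/
structure Building {V : Type} (L B : SCplx V) : Prop where
  sub : B ⊆ L
  single : ∀ v, ({v} : Finset V) ∈ L → ({v} : Finset V) ∈ B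
  union : ∀ X ∈ B, ∀ Y ∈ B, (∃ v, v ∈ X ∧ v ∈ Y) → X ∪ Y ∈ L → X ∪ Y ∈ B

/-- The nested set complex of `B`. The usual condition that an antichain of at least two members
of `U` never has its union in `B` is expressed equivalently as: if the union of some members of `U`
lies in `B`, then it is one of those members. -/
def nested {V : Type} (L B : SCplx V) : SCplx (Finset V) :=
  {U | (∀ X ∈ U, X ∈ B) ∧ U.sup id ∈ L ∧ ∀ A ⊆ U, A.sup id ∈ B → A.sup id ∈ A}

theorem mem_sup_id {V : Type} {A : Finset (Finset V)} {v : V} :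
    v ∈ A.sup id ↔ ∃ X ∈ A, v ∈ X := by
  simp [Finset.mem_sup]

theorem subset_sup_id {V : Type} {A : Finset (Finset V)} {X : Finset V} (h : X ∈ A) :
    X ⊆ A.sup id := fun _ hv => mem_sup_id.2 ⟨X, h, hv⟩

theorem sup_id_subset {V : Type} {A : Finset (Finset V)} {Y : Finset V} (h : ∀ X ∈ A, X ⊆ Y) :
    A.sup id ⊆ Y := fun _ hv => let ⟨X, hX, hvX⟩ := mem_sup_id.1 hv; h X hX hvX

theorem nested_isComplex {V : Type} {L B : SCplx V} (hL : IsComplex L) (hB : B ⊆ L) :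
    IsComplex (nested L B) := by
  refine ⟨fun U hU => ?_, fun U hU T hT hne => ?_⟩
  · obtain ⟨v, hv⟩ := hL.1 _ hU.2.1
    obtain ⟨X, hX, -⟩ := mem_sup_id.1 hv
    exact ⟨X, hX⟩
  · refine ⟨fun X hX => hU.1 X (hT hX), hL.2 _ hU.2.1 _ (Finset.sup_mono hT) ?_,
      fun A hA => hU.2.2 A (hA.trans hT)⟩
    obtain ⟨X, hX⟩ := hne
    exact (hL.1 X (hB (hU.1 X (hT hX)))).mono (subset_sup_id hX)

/-- The building set whose nested set complex is `relbary L K`. -/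
def relBuilding {V : Type} (L K : SCplx V) : SCplx V :=
  {σ | σ ∈ L ∧ (σ ∉ K ∨ ∃ v, σ = {v})}

theorem relBuilding_building {V : Type} {L K : SCplx V} (hL : IsComplex L) (hK : IsComplex K) :
    Building L (relBuilding L K) := by
  refine ⟨fun σ h => h.1, fun v hv => ⟨hv, Or.inr ⟨v, rfl⟩⟩, fun X hX Y hY hXY hU => ⟨hU, ?_⟩⟩
  by_cases hUK : X ∪ Y ∈ K
  · right
    have hXK : X ∈ K := hK.2 _ hUK _ Finset.subset_union_left (hL.1 X hX.1)
    have hYK : Y ∈ K := hK.2 _ hUK _ Finset.subset_union_right (hL.1 Y hY.1)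
    obtain ⟨a, rfl⟩ := hX.2.resolve_left (not_not.2 hXK)
    obtain ⟨b, rfl⟩ := hY.2.resolve_left (not_not.2 hYK)
    obtain ⟨v, hv, hv'⟩ := hXY
    obtain rfl := Finset.mem_singleton.1 hv
    obtain rfl := Finset.mem_singleton.1 hv'
    exact ⟨v, by simp⟩
  · exact Or.inl hUK

/-- A nonempty finite chain has its union as a member. -/
theorem sup_mem_of_chain {V : Type} {c : Finset (Finset V)} (hne : c.Nonempty)
    (hc : ∀ σ ∈ c, ∀ σ' ∈ c, σ ⊆ σ' ∨ σ' ⊆ σ) : c.sup id ∈ c := by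
  obtain ⟨m, hm, hmax⟩ := c.exists_maximal hne
  have : c.sup id = m := by
    refine subset_antisymm (sup_id_subset fun X hX => ?_) (subset_sup_id hm)
    rcases hc X hX m hm with h | h
    · exact h
    · exact hmax hX h
  rwa [this]

theorem relbary_eq_nested {V : Type} {L K : SCplx V} (hL : IsComplex L) (hK : IsComplex K)
    (hKL : K ⊆ L) : relbary L K = nested L (relBuilding L K) := by
  ext U
  constructor
  · rintro ⟨hne, τ, c, hτ, hcL, hc, hτc, rfl⟩
    have hτK : ∀ v ∈ τ, ({v} : Finset V) ∈ K := by
      intro v hv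
      rcases hτ with rfl | hτ
      · simp at hv
      · exact hK.2 τ hτ _ (by simpa using hv) (by simp)
    -- a subset of the face meeting `c` has its union equal to its largest member from `c`
    have key : ∀ A ⊆ τ.image (fun v => ({v} : Finset V)) ∪ c, (∃ X ∈ A, X ∈ c) →
        A.sup id ∈ A ∧ A.sup id ∈ c := by
      rintro A hA ⟨X, hXA, hXc⟩
      have hm : (A.filter (· ∈ c)).sup id ∈ A.filter (· ∈ c) := by
        refine sup_mem_of_chain ⟨X, by simp [hXA, hXc]⟩ fun σ h σ' h' => ?_
        exact hc σ (Finset.mem_filter.1 h).2 σ' (Finset.mem_filter.1 h').2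
      have : A.sup id = (A.filter (· ∈ c)).sup id := by
        refine subset_antisymm (sup_id_subset fun Y hY => ?_)
          (Finset.sup_mono (Finset.filter_subset _ _))
        rcases Finset.mem_union.1 (hA hY) with h | h
        · obtain ⟨v, hv, rfl⟩ := Finset.mem_image.1 h
          exact Finset.singleton_subset_iff.2 (hτc _ (Finset.mem_filter.1 hm).2 hv)
        · exact subset_sup_id (Finset.mem_filter.2 ⟨hY, h⟩)
      rw [this]
      exact Finset.mem_filter.1 hm
    have key2 : ∀ A ⊆ τ.image (fun v => ({v} : Finset V)) ∪ c, (¬ ∃ X ∈ A, X ∈ c) →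
        ∀ X ∈ A, ∃ v ∈ τ, X = {v} := by
      intro A hA hno X hX
      rcases Finset.mem_union.1 (hA hX) with h | h
      · obtain ⟨v, hv, rfl⟩ := Finset.mem_image.1 h
        exact ⟨v, hv, rfl⟩
      · exact absurd ⟨X, hX, h⟩ hno
    -- a union of singletons of `τ` is a face of `K`
    have key3 : ∀ A ⊆ τ.image (fun v => ({v} : Finset V)) ∪ c, (¬ ∃ X ∈ A, X ∈ c) →
        A.Nonempty → A.sup id ∈ K := by
      rintro A hA hno ⟨X, hX⟩
      obtain ⟨v, hv, rfl⟩ := key2 A hA hno X hX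
      have hτ' : τ ∈ K := hτ.resolve_left (by rintro rfl; simp at hv)
      refine hK.2 τ hτ' _ (sup_id_subset fun Y hY => ?_) ⟨v, mem_sup_id.2 ⟨_, hX, by simp⟩⟩
      obtain ⟨w, hw, rfl⟩ := key2 A hA hno Y hY
      simpa using hw
    refine ⟨fun X hX => ?_, ?_, fun A hA hAB => ?_⟩
    · rcases Finset.mem_union.1 hX with h | h
      · obtain ⟨v, hv, rfl⟩ := Finset.mem_image.1 h
        exact ⟨hKL (hτK v hv), Or.inr ⟨v, rfl⟩⟩
      · exact ⟨(hcL X h).1, Or.inl (hcL X h).2⟩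
    · by_cases hno : ∃ X ∈ τ.image (fun v => ({v} : Finset V)) ∪ c, X ∈ c
      · exact (hcL _ (key _ subset_rfl hno).2).1
      · exact hKL (key3 _ subset_rfl hno hne)
    · by_cases hno : ∃ X ∈ A, X ∈ c
      · exact (key A hA hno).1
      · obtain ⟨w, hw⟩ := hL.1 _ hAB.1
        obtain ⟨X, hX, -⟩ := mem_sup_id.1 hw
        obtain ⟨v, hv⟩ := hAB.2.resolve_left (not_not.2 (key3 A hA hno ⟨X, hX⟩))
        obtain ⟨u, -, rfl⟩ := key2 A hA hno X hX
        have : u ∈ A.sup id := subset_sup_id hX (by simp)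
        rw [hv, Finset.mem_singleton] at this
        rw [hv, ← this]
        exact hX
  · rintro ⟨hUB, hUL, hUN⟩
    have hne : U.Nonempty := by
      obtain ⟨v, hv⟩ := hL.1 _ hUL
      obtain ⟨X, hX, -⟩ := mem_sup_id.1 hv
      exact ⟨X, hX⟩
    -- two members of `U`, one of them outside `K`, are comparable
    have cmp : ∀ X ∈ U, ∀ Y ∈ U, Y ∉ K → X ∪ Y = X ∨ X ∪ Y = Y := by
      intro X hX Y hY hYK
      have hs : ({X, Y} : Finset (Finset V)).sup id = X ∪ Y := by simp
      have hsub : ({X, Y} : Finset (Finset V)) ⊆ U := by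
        intro Z hZ
        rcases Finset.mem_insert.1 hZ with rfl | hZ
        · exact hX
        · exact Finset.mem_singleton.1 hZ ▸ hY
      have := hUN {X, Y} hsub
      rw [hs] at this
      have hmem := this ⟨hL.2 _ hUL _ (hs ▸ Finset.sup_mono hsub)
        ((hL.1 Y (hUB Y hY).1).mono Finset.subset_union_right),
        Or.inl fun h => hYK (hK.2 _ h _ Finset.subset_union_right (hL.1 Y (hUB Y hY).1))⟩
      simpa using hmem
    have sing : ∀ X ∈ U, X ∈ K → ∃ v, X = {v} := fun X hX hXK =>
      (hUB X hX).2.resolve_left (not_not.2 hXK)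
    refine ⟨hne, (U.filter (· ∈ K)).sup id, U.filter (· ∉ K), ?_, ?_, ?_, ?_, ?_⟩
    · rcases Finset.eq_empty_or_nonempty (U.filter (· ∈ K)) with h0 | ⟨X, hX⟩
      · left
        rw [h0]
        simp
      · right
        by_contra hcon
        have hX' := Finset.mem_filter.1 hX
        have := hUN (U.filter (· ∈ K)) (Finset.filter_subset _ _)
          ⟨hL.2 _ hUL _ (Finset.sup_mono (Finset.filter_subset _ _))
            ((hK.1 X hX'.2).mono (subset_sup_id hX)), Or.inl hcon⟩
        exact hcon (Finset.mem_filter.1 this).2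
    · intro σ hσ
      have := Finset.mem_filter.1 hσ
      exact ⟨(hUB σ this.1).1, this.2⟩
    · intro σ hσ σ' hσ'
      have h := Finset.mem_filter.1 hσ
      have h' := Finset.mem_filter.1 hσ'
      rcases cmp σ h.1 σ' h'.1 h'.2 with h | h
      · exact Or.inr (Finset.union_eq_left.1 h)
      · exact Or.inl (Finset.union_eq_right.1 h)
    · intro σ hσ
      have h := Finset.mem_filter.1 hσ
      refine sup_id_subset fun X hX => ?_
      have hX := Finset.mem_filter.1 hX
      rcases cmp X hX.1 σ h.1 h.2 with h1 | h1
      · have hsub := Finset.union_eq_left.1 h1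
        exact absurd (hK.2 X hX.2 σ hsub (hL.1 σ (hUB σ h.1).1)) h.2
      · exact Finset.union_eq_right.1 h1
    · ext X
      simp only [Finset.mem_union, Finset.mem_image, Finset.mem_filter, mem_sup_id]
      constructor
      · intro hX
        by_cases hXK : X ∈ K
        · obtain ⟨v, rfl⟩ := sing X hX hXK
          exact Or.inl ⟨v, ⟨_, ⟨hX, hXK⟩, by simp⟩, rfl⟩
        · exact Or.inr ⟨hX, hXK⟩
      · rintro (⟨v, ⟨Y, ⟨hY, hYK⟩, hvY⟩, rfl⟩ | h)
        · obtain ⟨w, rfl⟩ := sing Y hY hYK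
          rwa [Finset.mem_singleton.1 hvY]
        · exact h.1

/-! ### Enlarging a building set by one face is an edge subdivision -/

/-- If `S ∪ T` is a face outside the building set `B`, then `S` and `T` are the only maximal members
of `B` inside `S ∪ T`. -/
theorem Building.factor {V : Type} {L B : SCplx V} (hB : Building L B) (hL : IsComplex L)
    {S T : Finset V} (hS : S ∈ B) (hT : T ∈ B) (hST : S ∪ T ∈ L) (hSTB : S ∪ T ∉ B)
    {X : Finset V} (hX : X ∈ B) (hXST : X ⊆ S ∪ T) : X ⊆ S ∨ X ⊆ T := by
  by_contra! hcon
  obtain ⟨a, haX, haS⟩ := Finset.not_subset.1 hcon.1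
  obtain ⟨b, hbX, hbT⟩ := Finset.not_subset.1 hcon.2
  have haT : a ∈ T := (Finset.mem_union.1 (hXST haX)).resolve_left haS
  have hbS : b ∈ S := (Finset.mem_union.1 (hXST hbX)).resolve_right hbT
  have hXS : X ∪ S ∈ B := by
    refine hB.union X hX S hS ⟨b, hbX, hbS⟩ (hL.2 _ hST _ ?_ ⟨b, by simp [hbX]⟩)
    exact Finset.union_subset hXST Finset.subset_union_left
  have heq : X ∪ S ∪ T = S ∪ T := by
    rw [Finset.union_assoc, Finset.union_eq_right.2 hXST]
  have := hB.union _ hXS T hT ⟨a, by simp [haX], haT⟩ (heq ▸ hST)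
  exact hSTB (heq ▸ this)

theorem Building.disj {V : Type} {L B : SCplx V} (hB : Building L B)
    {S T : Finset V} (hS : S ∈ B) (hT : T ∈ B) (hST : S ∪ T ∈ L) (hSTB : S ∪ T ∉ B)
    {v : V} (hvS : v ∈ S) : v ∉ T :=
  fun hvT => hSTB (hB.union S hS T hT ⟨v, hvS, hvT⟩ hST)

/-- A nested family with union `S ∪ T` contains `S` : its members inside `S` already cover `S`,
by `Building.factor`. -/
theorem left_mem_of_sup_eq {V : Type} {L B : SCplx V} (hB : Building L B) (hL : IsComplex L)
    {S T : Finset V} (hS : S ∈ B) (hT : T ∈ B) (hST : S ∪ T ∈ L) (hSTB : S ∪ T ∉ B)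
    {A : Finset (Finset V)} (hAB : ∀ X ∈ A, X ∈ B) (hA : ∀ A' ⊆ A, A'.sup id ∈ B → A'.sup id ∈ A')
    (hsup : A.sup id = S ∪ T) : S ∈ A := by
  have h : (A.filter (· ⊆ S)).sup id = S := by
    refine subset_antisymm (sup_id_subset fun X hX => (Finset.mem_filter.1 hX).2) fun v hv => ?_
    have : v ∈ A.sup id := by simp [hsup, hv]
    obtain ⟨X, hX, hvX⟩ := mem_sup_id.1 this
    refine mem_sup_id.2 ⟨X, Finset.mem_filter.2 ⟨hX, ?_⟩, hvX⟩
    refine (hB.factor hL hS hT hST hSTB (hAB X hX) (hsup ▸ subset_sup_id hX)).resolve_right ?_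
    exact fun hXT => hB.disj hS hT hST hSTB hv (hXT hvX)
  have := hA _ (Finset.filter_subset (· ⊆ S) A) (by rwa [h])
  rw [h] at this
  exact (Finset.mem_filter.1 this).1

/-- Let `U` be nested for `insert (S ∪ T) B` and contain `S ∪ T`. If `S ∈ A` and the other members of
`A` come from `U`, then the union of `A`, if it lies in `B`, belongs to `A`. The proof replaces `S`
by `S ∪ T` in `A` and uses that `U` is nested. -/
theorem sup_mem_of_left {V : Type} {L B : SCplx V} (hB : Building L B) (hL : IsComplex L)
    {S T : Finset V} (hS : S ∈ B) (hT : T ∈ B) (hST : S ∪ T ∈ L) (hSTB : S ∪ T ∉ B)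
    (hB' : Building L (insert (S ∪ T) B)) {U : Finset (Finset V)}
    (hU : U ∈ nested L (insert (S ∪ T) B)) (hσ : S ∪ T ∈ U) {A : Finset (Finset V)}
    (hSA : S ∈ A) (hAU : ∀ X ∈ A, X ≠ S → X ∈ U) (hAB : A.sup id ∈ B) : A.sup id ∈ A := by
  have hSX := subset_sup_id hSA
  have hsub : insert (S ∪ T) (A.erase S) ⊆ U := by
    intro X hX
    rcases Finset.mem_insert.1 hX with rfl | hX
    · exact hσ
    · exact hAU X (Finset.mem_of_mem_erase hX) (Finset.ne_of_mem_erase hX)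
  have hsup : (insert (S ∪ T) (A.erase S)).sup id = A.sup id ∪ (S ∪ T) := by
    ext v
    simp only [mem_sup_id, Finset.mem_insert, Finset.mem_erase, Finset.mem_union]
    constructor
    · rintro ⟨X, rfl | hX, hv⟩
      · exact Or.inr (Finset.mem_union.1 hv)
      · exact Or.inl ⟨X, hX.2, hv⟩
    · rintro (⟨X, hX, hv⟩ | hv)
      · by_cases hXS : X = S
        · exact ⟨_, Or.inl rfl, Finset.mem_union_left _ (hXS ▸ hv)⟩
        · exact ⟨X, Or.inr ⟨hXS, hX⟩, hv⟩
      · exact ⟨_, Or.inl rfl, Finset.mem_union.2 hv⟩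
  obtain ⟨s, hs⟩ := hL.1 S (hB.sub hS)
  have hXL : A.sup id ∪ (S ∪ T) ∈ L := by
    refine hL.2 _ hU.2.1 _ (hsup ▸ Finset.sup_mono hsub) ⟨s, ?_⟩
    simp [hs]
  have hmem := hU.2.2 _ hsub (hsup ▸ hB'.union _ (Or.inr hAB) _ (Or.inl rfl)
    ⟨s, hSX hs, Finset.mem_union_left _ hs⟩ hXL)
  rw [hsup] at hmem
  rcases Finset.mem_insert.1 hmem with h | h
  · -- the union is a member of `B` between `S` and `S ∪ T`, hence equal to `S`
    rcases hB.factor hL hS hT hST hSTB hAB (Finset.union_eq_right.1 h) with h1 | h1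
    · rwa [subset_antisymm h1 hSX]
    · exact absurd (h1 (hSX hs)) (hB.disj hS hT hST hSTB hs)
  · have h2 := Finset.mem_of_mem_erase h
    have : A.sup id ∪ (S ∪ T) = A.sup id :=
      subset_antisymm (subset_sup_id h2) Finset.subset_union_left
    rwa [this] at h2

theorem pair_mem_nested {V : Type} {L B : SCplx V} (hB : Building L B) (hL : IsComplex L)
    {S T : Finset V} (hS : S ∈ B) (hT : T ∈ B) (hST : S ∪ T ∈ L) (hSTB : S ∪ T ∉ B) :
    ({S, T} : Finset (Finset V)) ∈ nested L B := by
  refine ⟨by simp [hS, hT], by simpa using hST, fun A hA hAB => ?_⟩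
  by_cases hSA : S ∈ A
  · by_cases hTA : T ∈ A
    · have : A = {S, T} := by
        refine subset_antisymm hA fun X hX => ?_
        rcases Finset.mem_insert.1 hX with rfl | hX
        · exact hSA
        · exact Finset.mem_singleton.1 hX ▸ hTA
      subst this
      exact absurd (by simpa using hAB) hSTB
    · have : A.sup id = S := by
        refine subset_antisymm (sup_id_subset fun X hX => ?_) (subset_sup_id hSA)
        rcases Finset.mem_insert.1 (hA hX) with rfl | h
        · exact subset_rfl
        · exact absurd (Finset.mem_singleton.1 h ▸ hX) hTA
      rwa [this]
  · obtain ⟨v, hv⟩ := hL.1 _ (hB.sub hAB)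
    obtain ⟨X, hX, -⟩ := mem_sup_id.1 hv
    have hAT : ∀ Y ∈ A, Y = T := by
      intro Y hY
      rcases Finset.mem_insert.1 (hA hY) with rfl | h
      · exact absurd hY hSA
      · exact Finset.mem_singleton.1 h
    have : A.sup id = T :=
      subset_antisymm (sup_id_subset fun Y hY => (hAT Y hY).subset)
        (hAT X hX ▸ subset_sup_id hX)
    rw [this]
    exact hAT X hX ▸ hX

/-- Adding `S ∪ T` to a building set subdivides the edge `{S, T}` of the nested set complex, the new
vertex being `S ∪ T`. -/
theorem nested_insert {V : Type} {L B : SCplx V} (hB : Building L B) (hL : IsComplex L)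
    {S T : Finset V} (hS : S ∈ B) (hT : T ∈ B) (hST : S ∪ T ∈ L) (hSTB : S ∪ T ∉ B)
    (hB' : Building L (insert (S ∪ T) B)) :
    nested L (insert (S ∪ T) B) = subdivAt (nested L B) {S, T} (S ∪ T) := by
  have hTS : T ∪ S = S ∪ T := Finset.union_comm T S
  have hSσ : S ≠ S ∪ T := fun h => hSTB (h ▸ hS)
  have hTσ : T ≠ S ∪ T := fun h => hSTB (h ▸ hT)
  -- a nested family of members of `B` with union `S ∪ T` contains both `S` and `T`
  have core : ∀ A : Finset (Finset V), (∀ X ∈ A, X ∈ B) →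
      (∀ A' ⊆ A, A'.sup id ∈ B → A'.sup id ∈ A') → A.sup id = S ∪ T →
      ({S, T} : Finset (Finset V)) ⊆ A := by
    intro A h1 h2 h3 X hX
    rcases Finset.mem_insert.1 hX with rfl | hX
    · exact left_mem_of_sup_eq hB hL hS hT hST hSTB h1 h2 h3
    · rw [Finset.mem_singleton.1 hX]
      exact left_mem_of_sup_eq hB hL hT hS (hTS ▸ hST) (hTS ▸ hSTB) h1 h2 (hTS ▸ h3)
  ext U
  constructor
  · intro hU
    have hno : ¬ ({S, T} : Finset (Finset V)) ⊆ U := by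
      intro h
      have h1 := hU.2.2 _ h
      have hs : ({S, T} : Finset (Finset V)).sup id = S ∪ T := by simp
      rw [hs] at h1
      have h2 := h1 (Or.inl rfl)
      simp only [Finset.mem_insert, Finset.mem_singleton] at h2
      exact h2.elim (fun h => hSσ h.symm) (fun h => hTσ h.symm)
    have hUB : ∀ X ∈ U, X ≠ S ∪ T → X ∈ B := fun X hX hne => (hU.1 X hX).resolve_left hne
    by_cases hσ : S ∪ T ∈ U
    · refine Or.inr ⟨hσ, hno, U.erase (S ∪ T) ∪ {S, T}, ⟨?_, ?_, ?_⟩, Finset.subset_union_right, ?_⟩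
      · intro X hX
        rcases Finset.mem_union.1 hX with h | h
        · exact hUB X (Finset.mem_of_mem_erase h) (Finset.ne_of_mem_erase h)
        · simp only [Finset.mem_insert, Finset.mem_singleton] at h
          rcases h with rfl | rfl
          exacts [hS, hT]
      · refine hL.2 _ hU.2.1 _ (sup_id_subset fun X hX => ?_) ?_
        · rcases Finset.mem_union.1 hX with h | h
          · exact subset_sup_id (Finset.mem_of_mem_erase h)
          · simp only [Finset.mem_insert, Finset.mem_singleton] at h
            rcases h with rfl | rfl
            exacts [Finset.subset_union_left.trans (subset_sup_id hσ),
              Finset.subset_union_right.trans (subset_sup_id hσ)]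
        · exact (hL.1 S (hB.sub hS)).mono (subset_sup_id (by simp))
      · intro A hA hAB
        have hAU : ∀ X ∈ A, X ≠ S → X ≠ T → X ∈ U := by
          intro X hX h1 h2
          rcases Finset.mem_union.1 (hA hX) with h | h
          · exact Finset.mem_of_mem_erase h
          · simp [h1, h2] at h
        by_cases hSA : S ∈ A
        · by_cases hTA : T ∈ A
          · -- replacing `S` and `T` by `S ∪ T` does not change the union
            have hsup : (insert (S ∪ T) ((A.erase S).erase T)).sup id = A.sup id := by
              refine subset_antisymm (sup_id_subset fun X hX => ?_) (sup_id_subset fun X hX => ?_)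
              · rcases Finset.mem_insert.1 hX with rfl | h
                · exact Finset.union_subset (subset_sup_id hSA) (subset_sup_id hTA)
                · exact subset_sup_id (Finset.mem_of_mem_erase (Finset.mem_of_mem_erase h))
              · have hσs : S ∪ T ⊆ (insert (S ∪ T) ((A.erase S).erase T)).sup id :=
                  subset_sup_id (Finset.mem_insert_self _ _)
                by_cases h1 : X = S
                · exact h1.subset.trans (Finset.subset_union_left.trans hσs)
                · by_cases h2 : X = T
                  · exact h2.subset.trans (Finset.subset_union_right.trans hσs)
                  · exact subset_sup_id (by simp [h1, h2, hX])
            have hsub : insert (S ∪ T) ((A.erase S).erase T) ⊆ U := by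
              intro X hX
              rcases Finset.mem_insert.1 hX with rfl | h
              · exact hσ
              · exact hAU X (Finset.mem_of_mem_erase (Finset.mem_of_mem_erase h))
                  (Finset.ne_of_mem_erase (Finset.mem_of_mem_erase h)) (Finset.ne_of_mem_erase h)
            have hm := hU.2.2 _ hsub (hsup ▸ Or.inr hAB)
            rw [hsup] at hm
            rcases Finset.mem_insert.1 hm with h | h
            · exact absurd (h ▸ hAB) hSTB
            · exact Finset.mem_of_mem_erase (Finset.mem_of_mem_erase h)
          · exact sup_mem_of_left hB hL hS hT hST hSTB hB' hU hσ hSA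
              (fun X hX h => hAU X hX h fun h' => hTA (h' ▸ hX)) hAB
        · by_cases hTA : T ∈ A
          · exact sup_mem_of_left hB hL hT hS (hTS ▸ hST) (hTS ▸ hSTB) (hTS ▸ hB') (hTS ▸ hU)
              (hTS ▸ hσ) hTA (fun X hX h => hAU X hX (fun h' => hSA (h' ▸ hX)) h) hAB
          · exact hU.2.2 A (fun X hX => hAU X hX (fun h => hSA (h ▸ hX)) fun h => hTA (h ▸ hX))
              (Or.inr hAB)
      · intro X hX
        by_cases h : X = S ∪ T
        · exact Or.inl h
        · exact Or.inr (Finset.mem_union_left _ (Finset.mem_erase.2 ⟨h, hX⟩))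
    · exact Or.inl ⟨⟨fun X hX => hUB X hX fun h => hσ (h ▸ hX), hU.2.1,
        fun A hA hAB => hU.2.2 A hA (Or.inr hAB)⟩, hno⟩
  · rintro (⟨hU, hno⟩ | ⟨hσ, hno, p, hp, hep, hUp⟩)
    · refine ⟨fun X hX => Or.inr (hU.1 X hX), hU.2.1, fun A hA hAB => ?_⟩
      rcases hAB with h | h
      · exact absurd ((core A (fun X hX => hU.1 X (hA hX))
          (fun A' hA' => hU.2.2 A' (hA'.trans hA)) h).trans hA) hno
      · exact hU.2.2 A hA h
    · have hSp : S ∈ p := hep (by simp)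
      have hTp : T ∈ p := hep (by simp)
      have hσp : S ∪ T ⊆ p.sup id := Finset.union_subset (subset_sup_id hSp) (subset_sup_id hTp)
      refine ⟨fun X hX => (hUp X hX).imp id (fun h => hp.1 X h), ?_, fun A hA hAB => ?_⟩
      · refine hL.2 _ hp.2.1 _ (sup_id_subset fun X hX => ?_)
          ((hL.1 _ hST).mono (subset_sup_id hσ))
        rcases hUp X hX with rfl | h
        exacts [hσp, subset_sup_id h]
      · by_cases hσA : S ∪ T ∈ A
        · -- replacing `S ∪ T` by `S` and `T` does not change the union
          rcases hAB with h | h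
          · rwa [h]
          have hsup : (A.erase (S ∪ T) ∪ {S, T}).sup id = A.sup id := by
            have h1 : S ⊆ (A.erase (S ∪ T) ∪ {S, T}).sup id := subset_sup_id (by simp)
            have h2 : T ⊆ (A.erase (S ∪ T) ∪ {S, T}).sup id := subset_sup_id (by simp)
            refine subset_antisymm (sup_id_subset fun X hX => ?_) (sup_id_subset fun X hX => ?_)
            · rcases Finset.mem_union.1 hX with h | h
              · exact subset_sup_id (Finset.mem_of_mem_erase h)
              · simp only [Finset.mem_insert, Finset.mem_singleton] at h
                rcases h with rfl | rfl
                exacts [Finset.subset_union_left.trans (subset_sup_id hσA),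
                  Finset.subset_union_right.trans (subset_sup_id hσA)]
            · by_cases h : X = S ∪ T
              · exact h ▸ Finset.union_subset h1 h2
              · exact subset_sup_id (Finset.mem_union_left _ (Finset.mem_erase.2 ⟨h, hX⟩))
          have hsub : A.erase (S ∪ T) ∪ {S, T} ⊆ p := by
            refine Finset.union_subset (fun X hX => ?_) hep
            exact (hUp X (hA (Finset.mem_of_mem_erase hX))).resolve_left (Finset.ne_of_mem_erase hX)
          have hm := hp.2.2 _ hsub (hsup ▸ h)
          rw [hsup] at hm
          have hσX := subset_sup_id hσA
          rcases Finset.mem_union.1 hm with h | h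
          · exact Finset.mem_of_mem_erase h
          · simp only [Finset.mem_insert, Finset.mem_singleton] at h
            rcases h with h | h
            · exact absurd (subset_antisymm Finset.subset_union_left (h ▸ hσX)) hSσ
            · exact absurd (subset_antisymm Finset.subset_union_right (h ▸ hσX)) hTσ
        · have hAp : A ⊆ p := fun X hX =>
            (hUp X (hA hX)).resolve_left fun h => hσA (h ▸ hX)
          rcases hAB with h | h
          · exact absurd ((core A (fun X hX => hp.1 X (hAp hX))
              (fun A' hA' => hp.2.2 A' (hA'.trans hAp)) h).trans hA) hno
          · exact hp.2.2 A hAp h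

/-! ### Growing the building set -/

/-- The flagness of `J` enters here: as long as some face outside `J` is missing from `B`, there is a
missing face outside `J` that is the union of two members of `B`. -/
theorem exists_union {V : Type} {L J B : SCplx V} (hL : IsComplex L) (hJ : IsComplex J)
    (hflag : FlagCplx J) (hB : Building L B)
    (hne : ∃ σ, σ ∈ L ∧ σ ∉ J ∧ σ ∉ B) :
    ∃ S ∈ B, ∃ T ∈ B, S ∪ T ∈ L ∧ S ∪ T ∉ J ∧ S ∪ T ∉ B := by
  obtain ⟨σ, ⟨hσL, hσJ, hσB⟩, hmin⟩ :=
    WellFounded.has_min (wellFounded_lt (α := Finset V)) {σ | σ ∈ L ∧ σ ∉ J ∧ σ ∉ B} hne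
  have hσne := hL.1 σ hσL
  have hv : ∀ v ∈ σ, ({v} : Finset V) ∈ L := fun v hv =>
    hL.2 σ hσL _ (by simpa using hv) (by simp)
  by_cases hex : ∃ y ∈ σ, (σ.erase y).Nonempty ∧ σ.erase y ∉ J
  · obtain ⟨y, hy, hne', hyJ⟩ := hex
    have hyL : σ.erase y ∈ L := hL.2 σ hσL _ (Finset.erase_subset _ _) hne'
    have hyB : σ.erase y ∈ B := by
      by_contra h
      exact hmin _ ⟨hyL, hyJ, h⟩ (Finset.erase_ssubset hy)
    have heq : σ.erase y ∪ {y} = σ := by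
      ext v
      by_cases h : v = y <;> simp [h, hy]
    exact ⟨_, hyB, {y}, hB.single y (hv y hy), by rwa [heq], by rwa [heq], by rwa [heq]⟩
  · push Not at hex
    -- all proper faces of `σ` lie in `J`
    have hprop : ∀ t ⊂ σ, t.Nonempty → t ∈ J := by
      intro t ht htne
      obtain ⟨y, hy, hyt⟩ := Finset.exists_of_ssubset ht
      have hsub : t ⊆ σ.erase y := fun v hvt =>
        Finset.mem_erase.2 ⟨fun h => hyt (h ▸ hvt), ht.1 hvt⟩
      exact hJ.2 _ (hex y hy (htne.mono hsub)) t hsub htne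
    have hσ1 : ∀ v, σ ≠ {v} := fun v h =>
      hσB (h ▸ hB.single v (h ▸ hσL))
    have hedge : ∃ u ∈ σ, ∃ v ∈ σ, u ≠ v ∧ ({u, v} : Finset V) ∉ J := by
      by_contra! hcon
      refine hσJ (hflag σ hσne (fun v hvσ => hprop _ ?_ (by simp)) hcon)
      exact (Finset.singleton_subset_iff.2 hvσ).ssubset_of_ne (hσ1 v).symm
    obtain ⟨u, hu, v, hvσ, -, huv⟩ := hedge
    have hsub : ({u, v} : Finset V) ⊆ σ := by
      intro w hw
      rcases Finset.mem_insert.1 hw with rfl | hw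
      · exact hu
      · exact Finset.mem_singleton.1 hw ▸ hvσ
    have heq : ({u} ∪ {v} : Finset V) = σ := by
      by_contra h
      exact huv (hprop _ (hsub.ssubset_of_ne h) (by simp))
    exact ⟨{u}, hB.single u (hv u hu), {v}, hB.single v (hv v hvσ), by rwa [heq], by rwa [heq],
      by rwa [heq]⟩

/-- A maximal missing face outside `J` among the unions of two members of `B` can be added to `B`. -/
theorem exists_insert {V : Type} [Fintype V] {L J B : SCplx V} (hL : IsComplex L)
    (hJ : IsComplex J) (hflag : FlagCplx J) (hB : Building L B)
    (hne : ∃ σ, σ ∈ L ∧ σ ∉ J ∧ σ ∉ B) :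
    ∃ S ∈ B, ∃ T ∈ B, S ∪ T ∈ L ∧ S ∪ T ∉ J ∧ S ∪ T ∉ B ∧ Building L (insert (S ∪ T) B) := by
  obtain ⟨S₀, hS₀, T₀, hT₀, h₀⟩ := exists_union hL hJ hflag hB hne
  obtain ⟨σ, ⟨⟨S, hS, T, hT, rfl⟩, hσL, hσJ, hσB⟩, hmax⟩ :=
    WellFounded.has_min (wellFounded_gt (α := Finset V))
      {σ | (∃ S ∈ B, ∃ T ∈ B, σ = S ∪ T) ∧ σ ∈ L ∧ σ ∉ J ∧ σ ∉ B}
      ⟨S₀ ∪ T₀, ⟨S₀, hS₀, T₀, hT₀, rfl⟩, h₀⟩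
  -- closure under union with `S ∪ T`, by maximality
  have hbig : ∀ S' ∈ B, ∀ T' ∈ B, S ∪ T ⊆ S' ∪ T' → S' ∪ T' ∈ L →
      S' ∪ T' ∈ insert (S ∪ T) B := by
    intro S' hS' T' hT' hsub hL'
    by_contra h
    rw [Set.mem_insert_iff, not_or] at h
    refine hmax _ ⟨⟨S', hS', T', hT', rfl⟩, hL', fun hJ' => ?_, h.2⟩
      (hsub.ssubset_of_ne fun h' => h.1 h'.symm)
    exact hσJ (hJ.2 _ hJ' _ hsub (hL.1 _ hσL))
  have hclose : ∀ X ∈ B, (∃ v, v ∈ X ∧ v ∈ S ∪ T) → X ∪ (S ∪ T) ∈ L →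
      X ∪ (S ∪ T) ∈ insert (S ∪ T) B := by
    rintro X hX ⟨v, hvX, hv⟩ hXL
    rcases Finset.mem_union.1 hv with hv | hv
    · have hXS : X ∪ S ∈ B := by
        refine hB.union X hX S hS ⟨v, hvX, hv⟩ (hL.2 _ hXL _ ?_ ⟨v, by simp [hvX]⟩)
        exact Finset.union_subset_union_right Finset.subset_union_left
      rw [← Finset.union_assoc] at hXL ⊢
      refine hbig _ hXS T hT ?_ hXL
      exact Finset.union_subset_union_left Finset.subset_union_right
    · have hXT : X ∪ T ∈ B := by
        refine hB.union X hX T hT ⟨v, hvX, hv⟩ (hL.2 _ hXL _ ?_ ⟨v, by simp [hvX]⟩)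
        exact Finset.union_subset_union_right Finset.subset_union_right
      rw [Finset.union_left_comm] at hXL ⊢
      refine hbig S hS _ hXT ?_ hXL
      exact Finset.union_subset_union_right Finset.subset_union_right
  refine ⟨S, hS, T, hT, hσL, hσJ, hσB, ?_, fun v hv => Or.inr (hB.single v hv), ?_⟩
  · rintro X (rfl | hX)
    exacts [hσL, hB.sub hX]
  · rintro X (rfl | hX) Y (rfl | hY) ⟨v, hvX, hvY⟩ hU
    · rw [Finset.union_self]
      exact Or.inl rfl
    · rw [Finset.union_comm (S ∪ T) Y] at hU ⊢
      exact hclose Y hY ⟨v, hvY, hvX⟩ hU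
    · exact hclose X hX ⟨v, hvX, hvY⟩ hU
    · exact Or.inr (hB.union X hX Y hY ⟨v, hvX, hvY⟩ hU)

/-- The induction, on the number of faces outside `J` missing from the building set `B`. The complex
`M` is a copy of `nested L B` on an arbitrary vertex type, since each edge subdivision changes the
vertex type. -/
theorem iterSub_of_renames {V : Type} [Fintype V] {L J : SCplx V} (hL : IsComplex L)
    (hJ : IsComplex J) (hJL : J ⊆ L) (hflag : FlagCplx J) (n : ℕ) :
    ∀ (B : SCplx V) (W : Type) (M : SCplx W) (f : W → Finset V), Building L B →
      (∀ σ ∈ B, σ ∈ J → ∃ v, σ = {v}) → {σ | σ ∈ L ∧ σ ∉ J ∧ σ ∉ B}.ncard ≤ n →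
      Renames f M (nested L B) → IterSub M (relbary L J) := by
  induction n with
  | zero =>
    intro B W M f hB hBJ hcard hf
    have hempty : {σ | σ ∈ L ∧ σ ∉ J ∧ σ ∉ B} = ∅ :=
      (Set.ncard_eq_zero (Set.toFinite _)).1 (Nat.le_zero.1 hcard)
    have hBeq : B = relBuilding L J := by
      ext σ
      constructor
      · intro hσ
        refine ⟨hB.sub hσ, ?_⟩
        by_cases h : σ ∈ J
        · exact Or.inr (hBJ σ hσ h)
        · exact Or.inl h
      · rintro ⟨hσL, hσ | ⟨v, rfl⟩⟩
        · by_contra h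
          exact (hempty ▸ (show σ ∈ {σ | σ ∈ L ∧ σ ∉ J ∧ σ ∉ B} from ⟨hσL, hσ, h⟩) : σ ∈ (∅ : Set _))
        · exact hB.single v hσL
    rw [relbary_eq_nested hL hJ hJL, ← hBeq]
    exact IterSub.iso hf.isom
  | succ n ih =>
    intro B W M f hB hBJ hcard hf
    by_cases hne : ∃ σ, σ ∈ L ∧ σ ∉ J ∧ σ ∉ B
    · obtain ⟨S, hS, T, hT, hσL, hσJ, hσB, hB'⟩ := exists_insert hL hJ hflag hB hne
      obtain ⟨e, he, hee⟩ := (hf.mem_iff _).1 (pair_mem_nested hB hL hS hT hσL hσB)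
      have hSneT : S ≠ T := by
        rintro rfl
        rw [Finset.union_self] at hσB
        exact hσB hS
      have hecard : e.card = 2 := by
        rw [← Finset.card_pair hSneT, ← hee, hf.card_image he]
      have hnew : ∀ v ∈ verts M, f v ≠ S ∪ T := by
        intro v hv h
        have : ({f v} : Finset (Finset V)) ∈ nested L B := (hf.mem_iff _).2 ⟨{v}, hv, by simp⟩
        exact hσB (h ▸ this.1 (f v) (by simp))
      have hf' := hf.subdiv he hee hnew
      rw [← nested_insert hB hL hS hT hσL hσB hB'] at hf'
      refine IterSub.step e ⟨he, hecard⟩ (ih (insert (S ∪ T) B) _ _ _ hB' ?_ ?_ hf')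
      · rintro σ (rfl | hσ) hσ'
        · exact absurd hσ' hσJ
        · exact hBJ σ hσ hσ'
      · refine Nat.le_of_lt_succ (lt_of_lt_of_le (Set.ncard_lt_ncard ?_ (Set.toFinite _)) hcard)
        refine ⟨fun σ hσ => ⟨hσ.1, hσ.2.1, fun h => hσ.2.2 (Or.inr h)⟩, fun h => ?_⟩
        exact (h (show S ∪ T ∈ {σ | σ ∈ L ∧ σ ∉ J ∧ σ ∉ B} from ⟨hσL, hσJ, hσB⟩)).2.2 (Or.inl rfl)
    · refine ih B W M f hB hBJ ?_ hf
      have : {σ | σ ∈ L ∧ σ ∉ J ∧ σ ∉ B} = ∅ := Set.eq_empty_of_forall_notMem fun σ hσ => hne ⟨σ, hσ⟩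
      rw [this]
      simp

/-- Lemma `l:twosubs` of the paper:
if `J ⊆ K ⊆ L` are (finite) simplicial complexes with `J` flag, then `b(L, J)`
is an iterated edge subdivision of `b(L, K)`. -/
theorem relbary_iterSub_relbary
    {V : Type} [Fintype V] (L K J : SCplx V)
    (hL : IsComplex L) (hK : IsComplex K) (hJ : IsComplex J)
    (hKL : K ⊆ L) (hJK : J ⊆ K) (hJflag : FlagCplx J) :
    IterSub (relbary L K) (relbary L J) := by
  have hJL := hJK.trans hKL
  refine iterSub_of_renames hL hJ hJL hJflag _ (relBuilding L K) _ _ id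
    (relBuilding_building hL hK) ?_ le_rfl ?_
  · exact fun σ hσ hσJ => hσ.2.resolve_left (not_not.2 (hJK hσJ))
  · rw [relbary_eq_nested hL hK hKL]
    exact ⟨nested_isComplex hL (fun σ h => h.1), Set.injOn_id _, fun t => by simp⟩
end

section
/- Let (L, K) be a simplicial pair and let cL denote the cone on L with cone vertex c, so cK ⊆ cL. For any ordering σ₁, σ₂, …, σ_m of the simplices of L not in K by non-increasing dimension, successively performing the edge subdivision along the edge joining c to the barycenter v_{σ_i} (for i = 1, …, m) transforms the cone c·b(L, K) into a complex isomorphic to b(cL, cK). In particular, b(cL, cK) is an iterated edge subdivision of c·b(L, K). -/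
/-!
Give each vertex created during the process the simplex of `cL` whose barycenter it becomes: the
apex is labelled `{c}`, a vertex `s` of `b(L, K)` is labelled `s`, and the vertex added by
subdividing the edge from `c` to the barycenter of `σ i` is labelled `c * σ i`. In terms of the
labels, every intermediate complex has the same shape: a nonempty finite set of vertices is a face
exactly when its vertices in `K` span a simplex of `K` and its members are pairwise adjacent, where two
labels are adjacent after `n` steps if they are adjacent in `b(cL, cK)` or if one is `{c}` and the
other is a simplex of `L ∖ K` not among the first `n` (`stage`).

A complex of this shape (`semi`) keeps it under subdivision of an edge `{c, s}`: that edge is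
removed from the adjacency relation, and the new vertex is adjacent to the common neighbours of
`c` and `s` together with `c` and `s` (`subdiv_semi`). So the induction step reduces to
identifying these common neighbours with the neighbours of `c * σ i` (`Rn_new`), and this is where
the dimension ordering enters. At step `0` the complex is `c * b(L, K)` (`stage_zero`), and at
step `m` no extra adjacency is left, so the labelling is an isomorphism onto `b(cL, cK)`
(`relbary_cone_eq`, `isom_semi`).
-/

open scoped Classical

/-- The vertex type obtained from `V` by adding `i` new vertices one at a time. -/
def Tower (V : Type) : ℕ → Type
  | 0 => V
  | (i + 1) => Option (Tower V i)

/-- The canonical embedding of the original vertices into `Tower V i`. -/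
def towerEmb (V : Type) : (i : ℕ) → V → Tower V i
  | 0 => fun v => v
  | (i + 1) => fun v => some (towerEmb V i v)

/-! ### Complexes given by pairwise adjacency -/

/-- The complex of nonempty finite sets `S` of vertices satisfying `X` that are pairwise related
by `R` and satisfy a global condition `Q`. With `Q` trivial this is a flag complex; for relative
barycentric subdivisions `Q` says that the vertices of `S` lying in `K` span a simplex of `K`. -/
def semi {V : Type} (Q : Set V → Prop) (X : V → Prop) (R : V → V → Prop) : SCplx V :=
  {S | S.Nonempty ∧ Q (S : Set V) ∧ (∀ x ∈ S, X x) ∧ ∀ x ∈ S, ∀ y ∈ S, R x y}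

/-- Subdividing the edge `{c, s}` keeps the shape `semi`: the edge leaves the adjacency relation,
and the neighbours of the new vertex `none` are the common neighbours of `c` and `s` for the
reflexive relation `R`, so that `c` and `s` are among them. The condition `Q` must not depend on
whether `c` and `s` belong to a set. -/
lemma subdiv_semi {V : Type} {Q : Set V → Prop} {X : V → Prop} {R : V → V → Prop}
    {Q' : Set (Option V) → Prop} {X' : Option V → Prop} {R' : Option V → Option V → Prop}
    {c s : V} {e : Finset V} (he : ∀ x, x ∈ e ↔ x = c ∨ x = s) (hcs : c ≠ s)
    (hXc : X c) (hXs : X s) (hRs : ∀ x y, R x y → R y x) (hRr : ∀ x, R x x) (hRcs : R c s)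
    (hQ0 : Q ∅)
    (hQ : ∀ S T : Set V, (∀ x, x ≠ c → x ≠ s → (x ∈ S ↔ x ∈ T)) → Q S → Q T)
    (hQ' : ∀ S, Q' S ↔ Q (some ⁻¹' S))
    (hX : ∀ x, X' (some x) ↔ X x) (hX0 : X' none)
    (hR1 : ∀ x y, X x → X y →
      (R' (some x) (some y) ↔ R x y ∧ ¬ (x = c ∧ y = s) ∧ ¬ (x = s ∧ y = c)))
    (hR2 : ∀ x, X x → (R' (some x) none ↔ R x c ∧ R x s))
    (hR's : ∀ x y, R' x y → R' y x) (hR0 : R' none none) :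
    subdiv (semi Q X R) e = semi Q' X' R' := by
  ext S
  constructor
  · rintro (⟨τ, ⟨hne, hq, hx, hr⟩, hnot, rfl⟩ | ⟨τ, f, hτ, hf, rfl⟩)
    · refine ⟨hne.image _, ?_, ?_, ?_⟩
      · rw [hQ']
        refine hQ _ _ ?_ hq
        intro x _ _
        simp
      · intro x hxm
        obtain ⟨y, hy, rfl⟩ := Finset.mem_image.1 hxm
        exact (hX y).2 (hx y hy)
      · intro x hxm y hym
        obtain ⟨x, hx', rfl⟩ := Finset.mem_image.1 hxm
        obtain ⟨y, hy', rfl⟩ := Finset.mem_image.1 hym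
        refine (hR1 x y (hx x hx') (hx y hy')).2 ⟨hr x hx' y hy', ?_, ?_⟩
        · rintro ⟨rfl, rfl⟩
          exact hnot fun z hz => by rcases (he z).1 hz with rfl | rfl <;> assumption
        · rintro ⟨rfl, rfl⟩
          exact hnot fun z hz => by rcases (he z).1 hz with rfl | rfl <;> assumption
    · -- the empty face and the faces of the link are handled together
      have key : Q (τ : Set V) ∧ (∀ x ∈ τ, X x) ∧ (∀ x ∈ τ, ∀ y ∈ τ, R x y) ∧
          (∀ x ∈ τ, R x c ∧ R x s) ∧ (∀ x ∈ τ, x ≠ c ∧ x ≠ s) := by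
        rcases hτ with rfl | ⟨⟨_, hq, hx, hr⟩, hd, ⟨_, _, _, hr2⟩⟩
        · simpa using hQ0
        · refine ⟨hq, hx, hr, ?_, ?_⟩
          · intro x hxm
            have hxu := Finset.mem_union_left e hxm
            exact ⟨hr2 x hxu c (Finset.mem_union_right _ ((he c).2 (Or.inl rfl))),
              hr2 x hxu s (Finset.mem_union_right _ ((he s).2 (Or.inr rfl)))⟩
          · intro x hxm
            have := Finset.disjoint_left.1 hd hxm
            rw [he] at this
            tauto
      obtain ⟨hq, hx, hr, hrc, hn⟩ := key
      have hfe : ∀ x ∈ f, x = c ∨ x = s := fun x hx => (he x).1 (hf.1 hx)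
      have hf2 : ¬ (c ∈ f ∧ s ∈ f) := by
        rintro ⟨h1, h2⟩
        exact hf.2 fun z hz => by rcases (he z).1 hz with rfl | rfl <;> assumption
      have hXu : ∀ x ∈ τ ∪ f, X x := by
        intro x hxm
        rcases Finset.mem_union.1 hxm with h | h
        · exact hx x h
        · rcases hfe x h with rfl | rfl <;> assumption
      have hRc : ∀ x ∈ τ ∪ f, R x c ∧ R x s := by
        intro x hxm
        rcases Finset.mem_union.1 hxm with h | h
        · exact hrc x h
        · rcases hfe x h with rfl | rfl
          · exact ⟨hRr _, hRcs⟩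
          · exact ⟨hRs _ _ hRcs, hRr _⟩
      have hmem : ∀ x, x ∈ τ ∪ f → (x = c → c ∈ f) ∧ (x = s → s ∈ f) := by
        intro x hxm
        rcases Finset.mem_union.1 hxm with h | h
        · exact ⟨fun h' => absurd h' (hn x h).1, fun h' => absurd h' (hn x h).2⟩
        · exact ⟨fun h' => h' ▸ h, fun h' => h' ▸ h⟩
      refine ⟨Finset.insert_nonempty _ _, ?_, ?_, ?_⟩
      · rw [hQ']
        refine hQ _ _ ?_ hq
        intro x h1 h2
        have : x ∉ f := fun h => by rcases hfe x h with h | h <;> contradiction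
        simp [this]
      · intro x hxm
        cases x with
        | none => exact hX0
        | some x => exact (hX x).2 (hXu x (by simpa using hxm))
      · intro x hxm y hym
        cases x with
        | none =>
          cases y with
          | none => exact hR0
          | some y =>
            have hy : y ∈ τ ∪ f := by simpa using hym
            exact hR's _ _ ((hR2 y (hXu y hy)).2 (hRc y hy))
        | some x =>
          have hx' : x ∈ τ ∪ f := by simpa using hxm
          cases y with
          | none => exact (hR2 x (hXu x hx')).2 (hRc x hx')
          | some y =>
            have hy : y ∈ τ ∪ f := by simpa using hym
            refine (hR1 x y (hXu x hx') (hXu y hy)).2 ⟨?_, ?_, ?_⟩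
            · by_cases hxf : x ∈ f
              · rcases hfe x hxf with rfl | rfl
                · exact hRs _ _ (hRc y hy).1
                · exact hRs _ _ (hRc y hy).2
              · by_cases hyf : y ∈ f
                · rcases hfe y hyf with rfl | rfl
                  · exact (hRc x hx').1
                  · exact (hRc x hx').2
                · exact hr x ((Finset.mem_union.1 hx').resolve_right hxf) y
                    ((Finset.mem_union.1 hy).resolve_right hyf)
            · rintro ⟨h1, h2⟩
              exact hf2 ⟨(hmem x hx').1 h1, (hmem y hy).2 h2⟩
            · rintro ⟨h1, h2⟩
              exact hf2 ⟨(hmem y hy).1 h2, (hmem x hx').2 h1⟩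
  · rintro ⟨hne, hq, hx, hr⟩
    rw [hQ'] at hq
    have hXe : ∀ x, some x ∈ S → X x := fun x h => (hX x).1 (hx _ h)
    have hRe : ∀ x y, some x ∈ S → some y ∈ S →
        R x y ∧ ¬ (x = c ∧ y = s) ∧ ¬ (x = s ∧ y = c) := fun x y h1 h2 =>
      (hR1 x y (hXe x h1) (hXe y h2)).1 (hr _ h1 _ h2)
    have hnot : ¬ (some c ∈ S ∧ some s ∈ S) := fun h =>
      (hRe c s h.1 h.2).2.1 ⟨rfl, rfl⟩
    have hmE : ∀ x, x ∈ Finset.eraseNone S ↔ some x ∈ S := fun x => Finset.mem_eraseNone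
    have hce : c ∈ e := (he c).2 (Or.inl rfl)
    have hse : s ∈ e := (he s).2 (Or.inr rfl)
    by_cases h0 : none ∈ S
    · right
      have hRn : ∀ x, some x ∈ S → R x c ∧ R x s := fun x h =>
        (hR2 x (hXe x h)).1 (hr _ h _ h0)
      refine ⟨Finset.eraseNone S \ e, Finset.eraseNone S ∩ e, ?_, ?_, ?_⟩
      · by_cases hT : Finset.eraseNone S \ e = ∅
        · exact Or.inl hT
        right
        refine ⟨⟨Finset.nonempty_iff_ne_empty.2 hT, ?_, ?_, ?_⟩, Finset.sdiff_disjoint, ⟨?_, ?_, ?_, ?_⟩⟩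
        · refine hQ _ _ ?_ hq
          intro x h1 h2
          simp [he, h1, h2]
        · intro x h
          exact hXe x ((hmE x).1 (Finset.mem_sdiff.1 h).1)
        · intro x h y h'
          exact (hRe x y ((hmE x).1 (Finset.mem_sdiff.1 h).1)
            ((hmE y).1 (Finset.mem_sdiff.1 h').1)).1
        · exact ⟨c, Finset.mem_union_right _ hce⟩
        · refine hQ _ _ ?_ hq
          intro x h1 h2
          simp [he, h1, h2]
        · intro x h
          rcases Finset.mem_union.1 h with h | h
          · exact hXe x ((hmE x).1 (Finset.mem_sdiff.1 h).1)
          · rcases (he x).1 h with rfl | rfl <;> assumption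
        · have aux : ∀ x ∈ e, ∀ y ∈ e, R x y := by
            intro x h y h'
            rcases (he x).1 h with rfl | rfl <;> rcases (he y).1 h' with rfl | rfl
            · exact hRr _
            · exact hRcs
            · exact hRs _ _ hRcs
            · exact hRr _
          have aux2 : ∀ x, some x ∈ S → ∀ y ∈ e, R x y := by
            intro x h y h'
            rcases (he y).1 h' with rfl | rfl
            · exact (hRn x h).1
            · exact (hRn x h).2
          intro x h y h'
          rcases Finset.mem_union.1 h with h | h <;> rcases Finset.mem_union.1 h' with h' | h'
          · exact (hRe x y ((hmE x).1 (Finset.mem_sdiff.1 h).1)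
              ((hmE y).1 (Finset.mem_sdiff.1 h').1)).1
          · exact aux2 x ((hmE x).1 (Finset.mem_sdiff.1 h).1) y h'
          · exact hRs _ _ (aux2 y ((hmE y).1 (Finset.mem_sdiff.1 h').1) x h)
          · exact aux x h y h'
      · refine ⟨Finset.inter_subset_right, fun h => hnot ⟨?_, ?_⟩⟩
        · exact (hmE c).1 (Finset.mem_inter.1 (h hce)).1
        · exact (hmE s).1 (Finset.mem_inter.1 (h hse)).1
      · ext x
        cases x with
        | none => simpa using h0
        | some x =>
          simp only [Finset.mem_insert, Finset.mem_image, Finset.mem_union, Finset.mem_sdiff,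
            Finset.mem_inter, hmE, Option.some.injEq, exists_eq_right, reduceCtorEq, false_or]
          tauto
    · left
      have hS : S = (Finset.eraseNone S).image some := by
        ext x
        cases x with
        | none => simpa using h0
        | some x => simp
      refine ⟨Finset.eraseNone S, ⟨?_, ?_, ?_, ?_⟩, ?_, hS⟩
      · rw [hS] at hne
        exact Finset.image_nonempty.1 hne
      · refine hQ _ _ ?_ hq
        intro x _ _
        simp
      · exact fun x h => hXe x ((hmE x).1 h)
      · exact fun x h y h' => (hRe x y ((hmE x).1 h) ((hmE y).1 h')).1
      · exact fun h => hnot ⟨(hmE c).1 (h hce), (hmE s).1 (h hse)⟩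

lemma isom_semi {V W : Type} (f : V → W) (hf : Function.Injective f) {Q : Set W → Prop}
    {X : W → Prop} {R : W → W → Prop} (hX : ∀ w, X w → ∃ v, f v = w) :
    Isom (semi (fun S => Q (f '' S)) (fun x => X (f x)) fun x y => R (f x) (f y))
      (semi Q X R) := by
  refine ⟨f, ⟨?_, hf.injOn, ?_⟩, ?_, ?_⟩
  · rintro v ⟨-, h1, h2, h3⟩
    refine ⟨by simp, by simpa using h1, by simpa using h2, by simpa using h3⟩
  · rintro w ⟨-, h1, h2, h3⟩
    obtain ⟨v, rfl⟩ := hX w (h2 w (by simp))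
    refine ⟨v, ⟨by simp, by simpa using h1, by simpa using h2, by simpa using h3⟩, rfl⟩
  · rintro s ⟨h0, h1, h2, h3⟩
    refine ⟨h0.image _, by simpa using h1, by simpa using h2, by simpa using h3⟩
  · rintro t ⟨h0, h1, h2, h3⟩
    have ht : (t.preimage f hf.injOn).image f = t := by
      ext w
      simp only [Finset.mem_image, Finset.mem_preimage]
      constructor
      · rintro ⟨v, h, rfl⟩
        exact h
      · intro h
        obtain ⟨v, rfl⟩ := hX w (h2 w h)
        exact ⟨v, h, rfl⟩
    refine ⟨t.preimage f hf.injOn, ?_, ht⟩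
    generalize t.preimage f hf.injOn = s at ht
    subst ht
    refine ⟨Finset.image_nonempty.1 h0, by simpa using h1, by simpa using h2, by simpa using h3⟩

/-! ### Relative barycentric subdivisions and cones -/

/-- The relative barycentric subdivision is determined by pairwise comparability, except that
the vertices in `K` of a face must span a simplex of `K`. -/
lemma relbary_eq_semi {V : Type} {L K : SCplx V} (hL : IsComplex L) (hKL : K ⊆ L)
    (hK : IsComplex K) :
    relbary L K = semi
      (fun S => ∃ τ : Finset V, (τ = ∅ ∨ τ ∈ K) ∧ ∀ v, v ∈ τ ↔ {v} ∈ S ∧ {v} ∈ K)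
      (fun x => x ∈ L ∧ (x ∈ K → x.card = 1))
      (fun x y => x ⊆ y ∨ y ⊆ x ∨ (x ∈ K ∧ y ∈ K)) := by
  ext S
  constructor
  · rintro ⟨hne, τ, c, hτ, hc, hch, hτc, rfl⟩
    have hsing : ∀ v ∈ τ, ({v} : Finset V) ∈ K := by
      intro v hv
      rcases hτ with rfl | h
      · simp at hv
      · exact hK.2 τ h {v} (by simpa using hv) (by simp)
    refine ⟨hne, ⟨τ, hτ, ?_⟩, ?_, ?_⟩
    · intro v
      constructor
      · intro hv
        exact ⟨by simp [hv], hsing v hv⟩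
      · rintro ⟨h1, h2⟩
        rcases Finset.mem_union.1 (Finset.mem_coe.1 h1) with h | h
        · simpa using h
        · exact absurd h2 (hc _ h).2
    · intro x hx
      rcases Finset.mem_union.1 hx with h | h
      · obtain ⟨v, hv, rfl⟩ := Finset.mem_image.1 h
        exact ⟨hKL (hsing v hv), by simp⟩
      · exact ⟨(hc x h).1, fun h' => absurd h' (hc x h).2⟩
    · intro x hx y hy
      rcases Finset.mem_union.1 hx with h | h <;> rcases Finset.mem_union.1 hy with h' | h'
      · obtain ⟨v, hv, rfl⟩ := Finset.mem_image.1 h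
        obtain ⟨u, hu, rfl⟩ := Finset.mem_image.1 h'
        exact Or.inr (Or.inr ⟨hsing v hv, hsing u hu⟩)
      · obtain ⟨v, hv, rfl⟩ := Finset.mem_image.1 h
        exact Or.inl (by simpa using hτc y h' hv)
      · obtain ⟨u, hu, rfl⟩ := Finset.mem_image.1 h'
        exact Or.inr (Or.inl (by simpa using hτc x h hu))
      · rcases hch x h y h' with h | h
        · exact Or.inl h
        · exact Or.inr (Or.inl h)
  · rintro ⟨hne, ⟨τ, hτ, hm⟩, hx, hr⟩
    refine ⟨hne, τ, S.filter (· ∉ K), hτ, ?_, ?_, ?_, ?_⟩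
    · intro x h
      rw [Finset.mem_filter] at h
      exact ⟨(hx x h.1).1, h.2⟩
    · intro x h y h'
      rw [Finset.mem_filter] at h h'
      have := hr x h.1 y h'.1
      tauto
    · intro x h v hv
      rw [Finset.mem_filter] at h
      obtain ⟨h1, h2⟩ := (hm v).1 hv
      rcases hr _ (Finset.mem_coe.1 h1) x h.1 with h' | h' | h'
      · simpa using h'
      · rcases Finset.subset_singleton_iff.1 h' with h' | h'
        · exact absurd h' (hL.1 x (hx x h.1).1).ne_empty
        · exact absurd (h' ▸ h2) h.2
      · exact absurd h'.2 h.2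
    · ext x
      simp only [Finset.mem_union, Finset.mem_image, Finset.mem_filter]
      constructor
      · intro h
        by_cases hxK : x ∈ K
        · left
          obtain ⟨v, rfl⟩ := Finset.card_eq_one.1 ((hx x h).2 hxK)
          exact ⟨v, (hm v).2 ⟨h, hxK⟩, rfl⟩
        · exact Or.inr ⟨h, hxK⟩
      · rintro (⟨v, hv, rfl⟩ | h)
        · exact ((hm v).1 hv).1
        · exact h.1

lemma mem_cone_iff {V : Type} {L : SCplx V} (x : Finset (Option V)) :
    x ∈ cone L ↔ x.Nonempty ∧ (Finset.eraseNone x = ∅ ∨ Finset.eraseNone x ∈ L) := by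
  constructor
  · rintro ⟨τ, hτ, ⟨hne, rfl⟩ | rfl⟩
    · refine ⟨hne.image _, ?_⟩
      have : Finset.eraseNone (τ.image some) = τ := by ext; simp
      rwa [this]
    · refine ⟨Finset.insert_nonempty _ _, ?_⟩
      have : Finset.eraseNone (insert none (τ.image some)) = τ := by ext; simp
      rwa [this]
  · rintro ⟨hne, h⟩
    refine ⟨Finset.eraseNone x, h, ?_⟩
    by_cases h0 : none ∈ x
    · right
      ext y
      cases y <;> simp [h0]
    · left
      have hx : x = (Finset.eraseNone x).image some := by
        ext y
        cases y <;> simp [h0]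
      refine ⟨?_, hx⟩
      rw [hx] at hne
      exact Finset.image_nonempty.1 hne

lemma isComplex_cone {V : Type} {L : SCplx V} (hL : IsComplex L) : IsComplex (cone L) := by
  refine ⟨fun s hs => ((mem_cone_iff s).1 hs).1, fun s hs t hts ht => (mem_cone_iff t).2 ⟨ht, ?_⟩⟩
  have hsub : Finset.eraseNone t ⊆ Finset.eraseNone s := fun x hx =>
    Finset.mem_eraseNone.2 (hts (Finset.mem_eraseNone.1 hx))
  by_cases h0 : Finset.eraseNone t = ∅
  · exact Or.inl h0
  · right
    rcases ((mem_cone_iff s).1 hs).2 with h | h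
    · rw [h] at hsub
      exact absurd (Finset.subset_empty.1 hsub) h0
    · exact hL.2 _ h _ hsub (Finset.nonempty_iff_ne_empty.2 h0)

/-! ### Labels in the cone -/

/-- A simplex of `L`, seen in the cone `cL`. -/
def up {V : Type} (s : Finset V) : Finset (Option V) := s.map Function.Embedding.some

/-- The simplex `c * s` of the cone `cL`. -/
def cup {V : Type} (s : Finset V) : Finset (Option V) := Finset.insertNone s

section Labels

variable {V : Type}

@[simp] lemma some_mem_up (s : Finset V) (v : V) : some v ∈ up s ↔ v ∈ s := by simp [up]

@[simp] lemma none_notMem_up (s : Finset V) : none ∉ up s := by simp [up]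

@[simp] lemma some_mem_cup (s : Finset V) (v : V) : some v ∈ cup s ↔ v ∈ s := by simp [cup]

@[simp] lemma none_mem_cup (s : Finset V) : none ∈ cup s := by simp [cup]

@[simp] lemma up_subset_up (s t : Finset V) : up s ⊆ up t ↔ s ⊆ t := by simp [up]

@[simp] lemma cup_subset_cup (s t : Finset V) : cup s ⊆ cup t ↔ s ⊆ t := by simp [cup]

@[simp] lemma up_subset_cup (s t : Finset V) : up s ⊆ cup t ↔ s ⊆ t := by
  constructor
  · intro h v hv
    simpa using h ((some_mem_up s v).2 hv)
  · intro h v hv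
    cases v with
    | none => simp
    | some v => simpa using h ((some_mem_up s v).1 hv)

@[simp] lemma cup_not_subset_up (s t : Finset V) : ¬ cup s ⊆ up t := fun h =>
  none_notMem_up t (h (none_mem_cup s))

@[simp] lemma up_inj (s t : Finset V) : up s = up t ↔ s = t := by simp [up]

@[simp] lemma cup_inj (s t : Finset V) : cup s = cup t ↔ s = t := by simp [cup]

@[simp] lemma cup_ne_up (s t : Finset V) : cup s ≠ up t := fun h =>
  cup_not_subset_up s t h.subset

@[simp] lemma up_ne_cup (s t : Finset V) : up s ≠ cup t := (cup_ne_up t s).symm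

lemma singleton_none : ({none} : Finset (Option V)) = cup ∅ := by
  ext x
  cases x <;> simp

lemma singleton_some (v : V) : ({some v} : Finset (Option V)) = up {v} := by
  ext x
  cases x <;> simp

@[simp] lemma cup_mem_cone {L : SCplx V} (s : Finset V) : cup s ∈ cone L ↔ s = ∅ ∨ s ∈ L := by
  have : Finset.eraseNone (cup s) = s := by ext; simp
  rw [mem_cone_iff, this]
  exact and_iff_right ⟨none, by simp⟩

lemma up_mem_cone {L : SCplx V} (hL : IsComplex L) (s : Finset V) : up s ∈ cone L ↔ s ∈ L := by
  have : Finset.eraseNone (up s) = s := by ext; simp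
  rw [mem_cone_iff, this]
  constructor
  · rintro ⟨h, rfl | h'⟩
    · simp [up] at h
    · exact h'
  · intro h
    exact ⟨(hL.1 s h).map, Or.inr h⟩

lemma eq_up_or_cup (x : Finset (Option V)) : ∃ s, x = up s ∨ x = cup s := by
  refine ⟨Finset.eraseNone x, ?_⟩
  by_cases h0 : none ∈ x
  · right
    ext y
    cases y <;> simp [h0]
  · left
    ext y
    cases y <;> simp [h0]

@[simp] lemma card_cup (s : Finset V) : (cup s).card = s.card + 1 := by simp [cup]

@[simp] lemma card_up (s : Finset V) : (up s).card = s.card := by simp [up]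

end Labels

/-- The vertices in `K` of a set of labels span a simplex of `K`. -/
def QK {V : Type} (K : SCplx V) (S : Set (Finset (Option V))) : Prop :=
  ∃ τ : Finset V, (τ = ∅ ∨ τ ∈ K) ∧ ∀ v, v ∈ τ ↔ up {v} ∈ S ∧ {v} ∈ K

/-- The labels of the vertices after `n` subdivisions: the apex, the vertices of `b(L, K)`, and
the cones on the first `n` simplices of the enumeration `σ`. -/
def Xn {V : Type} (L K : SCplx V) (σ : ℕ → Finset V) (n : ℕ) (x : Finset (Option V)) : Prop :=
  x = cup ∅ ∨ (∃ t ∈ L, (t ∈ K → t.card = 1) ∧ x = up t) ∨ ∃ j < n, x = cup (σ j)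

/-- Adjacency of labels after `n` subdivisions: that of `b(cL, cK)`, together with the edges
joining the apex to the barycenters of the simplices not yet treated. -/
def Rn {V : Type} (K : SCplx V) (σ : ℕ → Finset V) (n : ℕ) (x y : Finset (Option V)) : Prop :=
  (x ⊆ y ∨ y ⊆ x ∨ (x ∈ cone K ∧ y ∈ cone K)) ∨
    (x = cup ∅ ∧ none ∉ y ∧ ∀ j < n, y ≠ up (σ j)) ∨
    (y = cup ∅ ∧ none ∉ x ∧ ∀ j < n, x ≠ up (σ j))

/-- The label of a vertex: the simplex of `cL` of which it becomes the barycenter. The vertex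
added by the `i`-th subdivision corresponds to the cone on `σ i`. -/
def lab {V : Type} (σ : ℕ → Finset V) :
    (i : ℕ) → Tower (Option (Finset V)) i → Finset (Option V)
  | 0 => fun x => Option.elim x (cup ∅) up
  | (i + 1) => fun x => Option.elim x (cup (σ i)) (lab σ i)

lemma lab_emb {V : Type} (σ : ℕ → Finset V) (i : ℕ) (x : Option (Finset V)) :
    lab σ i (towerEmb _ i x) = Option.elim x (cup ∅) up := by
  induction i with
  | zero => rfl
  | succ i ih => exact ih

/-- The complex reached after `n` subdivisions. -/
def stage {V : Type} (L K : SCplx V) (σ : ℕ → Finset V) (n : ℕ) :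
    SCplx (Tower (Option (Finset V)) n) :=
  semi (fun S => QK K (lab σ n '' S)) (fun x => Xn L K σ n (lab σ n x))
    (fun x y => Rn K σ n (lab σ n x) (lab σ n y))

/-! ### The intermediate complexes -/

section Stages

variable {V : Type} {L K : SCplx V} {m : ℕ} {σ : ℕ → Finset V}

lemma lab_form (i : ℕ) (x : Tower (Option (Finset V)) i) :
    (∃ t, lab σ i x = up t) ∨ lab σ i x = cup ∅ ∨ ∃ j < i, lab σ i x = cup (σ j) := by
  induction i with
  | zero =>
    cases x with
    | none => exact Or.inr (Or.inl rfl)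
    | some t => exact Or.inl ⟨t, rfl⟩
  | succ i ih =>
    cases x with
    | none => exact Or.inr (Or.inr ⟨i, by omega, rfl⟩)
    | some x =>
      rcases ih x with h | h | ⟨j, hj, h⟩
      · exact Or.inl h
      · exact Or.inr (Or.inl h)
      · exact Or.inr (Or.inr ⟨j, by omega, h⟩)

lemma lab_injective (hne : ∀ i < m, (σ i).Nonempty)
    (hinj : ∀ i < m, ∀ j < m, σ i = σ j → i = j) (i : ℕ) (hi : i ≤ m) :
    Function.Injective (lab σ i) := by
  induction i with
  | zero =>
    intro x y h
    cases x with
    | none =>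
      cases y with
      | none => rfl
      | some t => exact absurd h (cup_ne_up _ _)
    | some s =>
      cases y with
      | none => exact absurd h (up_ne_cup _ _)
      | some t => exact congrArg some ((up_inj _ _).1 h)
  | succ i ih =>
    have key : ∀ x : Tower (Option (Finset V)) i, lab σ i x ≠ cup (σ i) := by
      intro x h
      rcases lab_form (σ := σ) i x with ⟨t, ht⟩ | ht | ⟨j, hj, ht⟩ <;> rw [ht] at h
      · exact up_ne_cup _ _ h
      · exact (hne i (by omega)).ne_empty ((cup_inj _ _).1 h).symm
      · have := hinj j (by omega) i (by omega) ((cup_inj _ _).1 h)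
        omega
    intro x y h
    cases x with
    | none =>
      cases y with
      | none => rfl
      | some t => exact absurd h.symm (key t)
    | some s =>
      cases y with
      | none => exact absurd h (key s)
      | some t => exact congrArg some (ih (by omega) h)

lemma stage_zero (hL : IsComplex L) (hKL : K ⊆ L) (hK : IsComplex K) :
    stage L K σ 0 = cone (relbary L K) := by
  rw [relbary_eq_semi hL hKL hK]
  refine Set.ext fun (S : Finset (Option (Finset V))) => Iff.trans ?_ (mem_cone_iff S).symm
  have h1 : (∀ x ∈ S, Xn L K σ 0 (lab σ 0 x)) ↔
      ∀ t ∈ Finset.eraseNone S, t ∈ L ∧ (t ∈ K → t.card = 1) := by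
    constructor
    · intro h t ht
      have h' := h (some t) (Finset.mem_eraseNone.1 ht)
      simpa [Xn, lab] using h'
    · intro h x hx
      cases x with
      | none => exact Or.inl rfl
      | some t =>
        have ht := h t (Finset.mem_eraseNone.2 hx)
        exact Or.inr (Or.inl ⟨t, ht.1, ht.2, rfl⟩)
  have h2 : (∀ x ∈ S, ∀ y ∈ S, Rn K σ 0 (lab σ 0 x) (lab σ 0 y)) ↔
      ∀ x ∈ Finset.eraseNone S, ∀ y ∈ Finset.eraseNone S,
        x ⊆ y ∨ y ⊆ x ∨ (x ∈ K ∧ y ∈ K) := by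
    constructor
    · intro h x hx y hy
      have h' := h (some x) (Finset.mem_eraseNone.1 hx) (some y) (Finset.mem_eraseNone.1 hy)
      simpa [Rn, lab, up_mem_cone hK] using h'
    · intro h x hx y hy
      cases x with
      | none =>
        cases y with
        | none => simp [Rn, lab]
        | some y => simp [Rn, lab]
      | some x =>
        cases y with
        | none => simp [Rn, lab]
        | some y =>
          have h' := h x (Finset.mem_eraseNone.2 hx) y (Finset.mem_eraseNone.2 hy)
          simpa [Rn, lab, up_mem_cone hK] using h'
  have h3 : QK K (lab σ 0 '' (S : Set (Option (Finset V)))) ↔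
      ∃ τ : Finset V, (τ = ∅ ∨ τ ∈ K) ∧
        ∀ v, v ∈ τ ↔ {v} ∈ (Finset.eraseNone S : Set (Finset V)) ∧ {v} ∈ K := by
    have : ∀ v : V, up {v} ∈ lab σ 0 '' (S : Set (Option (Finset V))) ↔
        {v} ∈ (Finset.eraseNone S : Set (Finset V)) := by
      intro v
      rw [Finset.mem_coe, Finset.mem_eraseNone]
      constructor
      · rintro ⟨x, hx, h⟩
        cases x with
        | none => exact absurd h (cup_ne_up _ _)
        | some t =>
          rw [← (up_inj _ _).1 h]
          exact hx
      · intro h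
        exact ⟨some {v}, h, rfl⟩
    simp only [QK, this]
  constructor
  · rintro ⟨hne, hq, hx, hr⟩
    refine ⟨hne, ?_⟩
    by_cases h0 : Finset.eraseNone S = ∅
    · exact Or.inl h0
    · exact Or.inr ⟨Finset.nonempty_iff_ne_empty.2 h0, h3.1 hq, h1.1 hx, h2.1 hr⟩
  · rintro ⟨hne, h⟩
    refine ⟨hne, h3.2 ?_, h1.2 ?_, h2.2 ?_⟩
    · rcases h with h | ⟨_, h, _, _⟩
      · rw [h]
        exact ⟨∅, Or.inl rfl, by simp⟩
      · exact h
    · rcases h with h | ⟨_, _, h, _⟩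
      · simp [h]
      · exact h
    · rcases h with h | ⟨_, _, _, h⟩
      · simp [h]
      · exact h

lemma Rn_symm {n : ℕ} (x y : Finset (Option V)) (h : Rn K σ n x y) : Rn K σ n y x := by
  unfold Rn at *
  tauto

lemma Rn_succ (hK : IsComplex K) {i : ℕ} (hσK : σ i ∉ K) (hσ0 : σ i ≠ ∅)
    (x y : Finset (Option V)) :
    Rn K σ (i + 1) x y ↔ Rn K σ i x y ∧ ¬ (x = cup ∅ ∧ y = up (σ i)) ∧
      ¬ (x = up (σ i) ∧ y = cup ∅) := by
  have hbase : ¬ (cup ∅ ⊆ up (σ i) ∨ up (σ i) ⊆ cup ∅ ∨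
      (cup ∅ ∈ cone K ∧ up (σ i) ∈ cone K)) := by
    simp [up_mem_cone hK, hσK, hσ0]
  constructor
  · rintro (h | ⟨rfl, h0, h⟩ | ⟨rfl, h0, h⟩)
    · refine ⟨Or.inl h, ?_, ?_⟩
      · rintro ⟨rfl, rfl⟩
        exact hbase h
      · rintro ⟨rfl, rfl⟩
        exact hbase (by tauto)
    · exact ⟨Or.inr (Or.inl ⟨rfl, h0, fun j hj => h j (by omega)⟩),
        fun h' => h i (by omega) h'.2, fun h' => cup_ne_up _ _ h'.1⟩
    · exact ⟨Or.inr (Or.inr ⟨rfl, h0, fun j hj => h j (by omega)⟩),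
        fun h' => cup_ne_up _ _ h'.2, fun h' => h i (by omega) h'.1⟩
  · rintro ⟨h | ⟨rfl, h0, h⟩ | ⟨rfl, h0, h⟩, h1, h2⟩
    · exact Or.inl h
    · refine Or.inr (Or.inl ⟨rfl, h0, fun j hj => ?_⟩)
      rcases Nat.lt_succ_iff_lt_or_eq.1 hj with hj | rfl
      · exact h j hj
      · exact fun h' => h1 ⟨rfl, h'⟩
    · refine Or.inr (Or.inr ⟨rfl, h0, fun j hj => ?_⟩)
      rcases Nat.lt_succ_iff_lt_or_eq.1 hj with hj | rfl
      · exact h j hj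
      · exact fun hxi => h2 ⟨hxi, rfl⟩

/-- The earlier neighbours of the vertex added by the `i`-th subdivision are the common neighbours
of the apex and the barycenter of `σ i`, these two included. The ordering by
non-increasing dimension is used here: a simplex comparable with `σ i` that has not been treated
before step `i` is a face of `σ i`, and no proper face of `σ i` has been treated. -/
lemma Rn_new (hK : IsComplex K) (henum : ∀ s, (s ∈ L ∧ s ∉ K) ↔ ∃ i < m, σ i = s)
    (hne : ∀ i < m, (σ i).Nonempty)
    (hinj : ∀ i < m, ∀ j < m, σ i = σ j → i = j)
    (hmono : ∀ i j, i ≤ j → j < m → (σ j).card ≤ (σ i).card)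
    {i : ℕ} (hi : i < m) (x : Finset (Option V)) (hx : Xn L K σ i x) :
    Rn K σ (i + 1) x (cup (σ i)) ↔ Rn K σ i x (cup ∅) ∧ Rn K σ i x (up (σ i)) := by
  have hσK : σ i ∉ K := ((henum _).2 ⟨i, hi, rfl⟩).2
  have hσ0 : σ i ≠ ∅ := (hne i hi).ne_empty
  have hprev : ∀ j < i, σ i ≠ σ j := fun j hj h => by
    have := hinj i hi j (by omega) h
    omega
  rcases hx with rfl | ⟨t, htL, htK, rfl⟩ | ⟨j, hj, rfl⟩
  · have h1 : ∀ j < i, ¬ σ i = σ j := hprev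
    simp [Rn]
    tauto
  · by_cases ht : t ∈ K
    · have hc : ¬ σ i ⊆ t := fun h => hσK (hK.2 t ht _ h (hne i hi))
      simp [Rn, up_mem_cone hK, ht, hσK, hσ0]
      exact fun h => absurd h hc
    · obtain ⟨k, hk, rfl⟩ := (henum t).1 ⟨htL, ht⟩
      have hk0 : σ k ≠ ∅ := (hne k hk).ne_empty
      simp only [Rn, up_subset_cup, cup_not_subset_up, up_mem_cone hK, cup_mem_cone, ht, hσK, hσ0,
        cup_inj, up_inj, none_mem_cup, none_notMem_up, up_ne_cup, up_subset_up,
        Finset.subset_empty, hk0, ne_eq, not_false_eq_true, not_true, true_and, false_and,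
        and_false, or_false, false_or]
      constructor
      · intro h
        refine ⟨fun j hj hkj => ?_, Or.inl h⟩
        have hkj' := hinj k hk j (by omega) hkj
        subst hkj'
        exact hprev k hj (Finset.eq_of_subset_of_card_le h (hmono k i hj.le hi)).symm
      · rintro ⟨h1, h | h⟩
        · exact h
        · have hki : i ≤ k := by
            by_contra hlt
            exact h1 k (by omega) rfl
          exact (Finset.eq_of_subset_of_card_le h (hmono i k hki hk)).ge
  · have hjm : j < m := by omega
    have hj0 : σ j ≠ ∅ := (hne j hjm).ne_empty
    have hjK : σ j ∉ K := ((henum _).2 ⟨j, hjm, rfl⟩).2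
    simp [Rn, hj0, hjK, hσ0, hσK]
    intro h
    exact absurd (Finset.eq_of_subset_of_card_le h (hmono j i hj.le hi)).symm (hprev j hj)

lemma stage_succ (hK : IsComplex K) (henum : ∀ s, (s ∈ L ∧ s ∉ K) ↔ ∃ i < m, σ i = s)
    (hne : ∀ i < m, (σ i).Nonempty)
    (hinj : ∀ i < m, ∀ j < m, σ i = σ j → i = j)
    (hmono : ∀ i j, i ≤ j → j < m → (σ j).card ≤ (σ i).card)
    {i : ℕ} (hi : i < m) :
    IsEdge (stage L K σ i) (({none, some (σ i)} : Finset (Option (Finset V))).image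
        (towerEmb (Option (Finset V)) i)) ∧
      stage L K σ (i + 1) = subdiv (stage L K σ i)
        (({none, some (σ i)} : Finset (Option (Finset V))).image
          (towerEmb (Option (Finset V)) i)) := by
  obtain ⟨hσL, hσK⟩ := (henum (σ i)).2 ⟨i, hi, rfl⟩
  have hσ0 : σ i ≠ ∅ := (hne i hi).ne_empty
  have hlinj := lab_injective hne hinj i hi.le
  set e := ({none, some (σ i)} : Finset (Option (Finset V))).image
    (towerEmb (Option (Finset V)) i) with he_def
  set c := towerEmb (Option (Finset V)) i none with hc_def
  set s := towerEmb (Option (Finset V)) i (some (σ i)) with hs_def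
  have hlc : lab σ i c = cup ∅ := lab_emb σ i none
  have hls : lab σ i s = up (σ i) := lab_emb σ i (some (σ i))
  have he : ∀ x, x ∈ e ↔ x = c ∨ x = s := by
    intro x
    simp [he_def, hc_def, hs_def]
  have hcs : c ≠ s := fun h => by
    have := congrArg (lab σ i) h
    rw [hlc, hls] at this
    exact cup_ne_up _ _ this
  have hXc : Xn L K σ i (lab σ i c) := Or.inl hlc
  have hXs : Xn L K σ i (lab σ i s) := Or.inr (Or.inl ⟨σ i, hσL, fun h => absurd h hσK, hls⟩)
  have hRr : ∀ x, Rn K σ i (lab σ i x) (lab σ i x) := fun x => Or.inl (Or.inl subset_rfl)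
  have hprev : ∀ j < i, σ i ≠ σ j := fun j hj h => by
    have := hinj i hi j (by omega) h
    omega
  have hRcs : Rn K σ i (lab σ i c) (lab σ i s) := by
    rw [hlc, hls]
    exact Or.inr (Or.inl ⟨rfl, by simp, fun j hj h => hprev j hj ((up_inj _ _).1 h)⟩)
  -- neither end of the subdivided edge is labelled by a vertex of `K`
  have hQ : ∀ S T : Set (Tower (Option (Finset V)) i),
      (∀ x, x ≠ c → x ≠ s → (x ∈ S ↔ x ∈ T)) →
      QK K (lab σ i '' S) → QK K (lab σ i '' T) := by
    rintro S T h ⟨τ, hτ, hm⟩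
    refine ⟨τ, hτ, fun v => (hm v).trans (and_congr_left fun hv => ?_)⟩
    have hx : ∀ x, lab σ i x = up {v} → x ≠ c ∧ x ≠ s := by
      intro x hx
      constructor
      · rintro rfl
        exact cup_ne_up _ _ (hlc.symm.trans hx)
      · rintro rfl
        have := (up_inj _ _).1 (hls.symm.trans hx)
        exact hσK (this ▸ hv)
    constructor
    · rintro ⟨x, hxS, hxv⟩
      exact ⟨x, (h x (hx x hxv).1 (hx x hxv).2).1 hxS, hxv⟩
    · rintro ⟨x, hxS, hxv⟩
      exact ⟨x, (h x (hx x hxv).1 (hx x hxv).2).2 hxS, hxv⟩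
  have hQ0 : QK K (lab σ i '' ∅) := ⟨∅, Or.inl rfl, by simp⟩
  refine ⟨⟨⟨⟨c, (he c).2 (Or.inl rfl)⟩, ?_, ?_, ?_⟩, ?_⟩, ?_⟩
  · refine hQ _ _ ?_ hQ0
    intro x h1 h2
    simp [he, h1, h2]
  · intro x hx
    rcases (he x).1 hx with rfl | rfl <;> assumption
  · intro x hx y hy
    rcases (he x).1 hx with rfl | rfl <;> rcases (he y).1 hy with rfl | rfl
    · exact hRr _
    · exact hRcs
    · exact Rn_symm _ _ hRcs
    · exact hRr _
  · rw [Finset.card_eq_two]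
    exact ⟨c, s, hcs, by ext x; simp [he]⟩
  · symm
    refine subdiv_semi (V := Tower (Option (Finset V)) i) he hcs hXc hXs
      (fun x y => Rn_symm _ _) hRr hRcs hQ0 hQ ?_ ?_ ?_ ?_ ?_ ?_ ?_
    · intro S
      refine exists_congr fun τ => and_congr_right fun _ => forall_congr' fun v =>
        iff_congr Iff.rfl (and_congr_left fun _ => ?_)
      constructor
      · rintro ⟨x, hxS, hx⟩
        cases x with
        | none => exact absurd hx (cup_ne_up _ _)
        | some x => exact ⟨x, hxS, hx⟩
      · rintro ⟨x, hxS, hx⟩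
        exact ⟨some x, hxS, hx⟩
    · intro x
      change Xn L K σ (i + 1) (lab σ i x) ↔ Xn L K σ i (lab σ i x)
      constructor
      · rintro (h | h | ⟨j, hj, h⟩)
        · exact Or.inl h
        · exact Or.inr (Or.inl h)
        · rcases lab_form (σ := σ) i x with ⟨t, ht⟩ | h' | h'
          · exact absurd (ht.symm.trans h) (up_ne_cup _ _)
          · exact Or.inl h'
          · exact Or.inr (Or.inr h')
      · rintro (h | h | ⟨j, hj, h⟩)
        · exact Or.inl h
        · exact Or.inr (Or.inl h)
        · exact Or.inr (Or.inr ⟨j, by omega, h⟩)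
    · exact Or.inr (Or.inr ⟨i, by omega, rfl⟩)
    · intro x y hx hy
      change Rn K σ (i + 1) (lab σ i x) (lab σ i y) ↔ _
      have hxc : x = c ↔ lab σ i x = cup ∅ := by rw [← hlc, hlinj.eq_iff]
      have hyc : y = c ↔ lab σ i y = cup ∅ := by rw [← hlc, hlinj.eq_iff]
      have hxs : x = s ↔ lab σ i x = up (σ i) := by rw [← hls, hlinj.eq_iff]
      have hys : y = s ↔ lab σ i y = up (σ i) := by rw [← hls, hlinj.eq_iff]
      rw [hxc, hyc, hxs, hys]
      exact Rn_succ hK hσK hσ0 _ _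
    · intro x hx
      change Rn K σ (i + 1) (lab σ i x) (cup (σ i)) ↔ _
      rw [hlc, hls]
      exact Rn_new hK henum hne hinj hmono hi _ hx
    · exact fun x y => Rn_symm _ _
    · exact Or.inl (Or.inl subset_rfl)

/-- Once every simplex of `L ∖ K` has been treated, the labels describe `b(cL, cK)`. -/
lemma relbary_cone_eq (hL : IsComplex L) (hKL : K ⊆ L) (hK : IsComplex K)
    (henum : ∀ s, (s ∈ L ∧ s ∉ K) ↔ ∃ i < m, σ i = s) :
    relbary (cone L) (cone K) = semi (QK K) (Xn L K σ m) (Rn K σ m) := by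
  have hcKL : cone K ⊆ cone L := fun x hx => by
    rw [mem_cone_iff] at hx ⊢
    exact ⟨hx.1, hx.2.imp id fun h => hKL h⟩
  rw [relbary_eq_semi (isComplex_cone hL) hcKL (isComplex_cone hK)]
  have hX : ∀ x, (x ∈ cone L ∧ (x ∈ cone K → x.card = 1)) ↔ Xn L K σ m x := by
    intro x
    obtain ⟨t, rfl | rfl⟩ := eq_up_or_cup x
    · simp [Xn, up_mem_cone hL, up_mem_cone hK]
    · by_cases h0 : t = ∅
      · simp [Xn, h0]
      · have := henum t
        simp only [Xn, cup_mem_cone, h0, false_or, card_cup, cup_inj, cup_ne_up, and_false,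
          exists_false, Nat.add_eq_right, Finset.card_eq_zero, imp_false, this]
        simp [eq_comm]
  have hR : ∀ x y, Xn L K σ m x → Xn L K σ m y →
      ((x ⊆ y ∨ y ⊆ x ∨ (x ∈ cone K ∧ y ∈ cone K)) ↔ Rn K σ m x y) := by
    have aux : ∀ y, Xn L K σ m y → none ∉ y → (∀ j < m, y ≠ up (σ j)) → y ∈ cone K := by
      rintro y (rfl | ⟨t, htL, -, rfl⟩ | ⟨j, -, rfl⟩) h0 hj
      · simp at h0
      · rw [up_mem_cone hK]
        by_contra ht
        obtain ⟨k, hk, rfl⟩ := (henum t).1 ⟨htL, ht⟩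
        exact hj k hk rfl
      · simp at h0
    have hcc : cup (∅ : Finset V) ∈ cone K := by simp
    intro x y hx hy
    constructor
    · exact Or.inl
    · rintro (h | ⟨rfl, h1, h2⟩ | ⟨rfl, h1, h2⟩)
      · exact h
      · exact Or.inr (Or.inr ⟨hcc, aux y hy h1 h2⟩)
      · exact Or.inr (Or.inr ⟨aux x hx h1 h2, hcc⟩)
  -- the apex may be added to or removed from the simplex spanned by the vertices in `cK`
  have hQ : ∀ S : Set (Finset (Option V)), (∃ τ : Finset (Option V), (τ = ∅ ∨ τ ∈ cone K) ∧
      ∀ v, v ∈ τ ↔ {v} ∈ S ∧ {v} ∈ cone K) ↔ QK K S := by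
    intro S
    constructor
    · rintro ⟨τ, hτ, hm⟩
      refine ⟨Finset.eraseNone τ, ?_, fun v => ?_⟩
      · rcases hτ with rfl | h
        · left; ext; simp
        · exact ((mem_cone_iff τ).1 h).2
      · rw [Finset.mem_eraseNone, hm, singleton_some, up_mem_cone hK]
    · rintro ⟨τ, hτ, hm⟩
      have hm' : ∀ v, v ∈ τ ↔ {some v} ∈ S ∧ {some v} ∈ cone K := by
        intro v
        rw [hm, singleton_some, up_mem_cone hK]
      have hcc : ({none} : Finset (Option V)) ∈ cone K := by simp [singleton_none]
      by_cases h0 : {none} ∈ S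
      · refine ⟨cup τ, Or.inr ((cup_mem_cone τ).2 hτ), fun v => ?_⟩
        cases v with
        | none => simp [h0, hcc]
        | some v => rw [some_mem_cup, hm']
      · refine ⟨up τ, ?_, fun v => ?_⟩
        · rcases hτ with rfl | h
          · left; simp [up]
          · exact Or.inr ((up_mem_cone hK τ).2 h)
        · cases v with
          | none => simp [h0]
          | some v => rw [some_mem_up, hm']
  ext S
  constructor
  · rintro ⟨h0, hq, hx, hr⟩
    have hx' := fun x h => (hX x).1 (hx x h)
    exact ⟨h0, (hQ _).1 hq, hx', fun x h y h' => (hR x y (hx' x h) (hx' y h')).1 (hr x h y h')⟩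
  · rintro ⟨h0, hq, hx, hr⟩
    exact ⟨h0, (hQ _).2 hq, fun x h => (hX x).2 (hx x h),
      fun x h y h' => (hR x y (hx x h) (hx y h')).2 (hr x h y h')⟩

lemma lab_surj (n : ℕ) (w : Finset (Option V)) (hw : Xn L K σ n w) : ∃ x, lab σ n x = w := by
  rcases hw with rfl | ⟨t, -, -, rfl⟩ | ⟨j, hj, rfl⟩
  · exact ⟨towerEmb _ n none, lab_emb σ n none⟩
  · exact ⟨towerEmb _ n (some t), lab_emb σ n (some t)⟩
  · induction n with
    | zero => omega
    | succ n ih =>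
      rcases Nat.lt_succ_iff_lt_or_eq.1 hj with h | rfl
      · obtain ⟨x, hx⟩ := ih h
        exact ⟨some x, hx⟩
      · exact ⟨none, rfl⟩

end Stages

/-! ### The sequence of subdivisions -/

/-- Lemma `l:psubdiv` of the paper:
let `(L, K)` be a simplicial pair and `cL` the cone on `L` (cone vertex `c`).
For any ordering `σ₁, …, σ_m` of the simplices of `L ∖ K` by non-increasing
dimension, successively subdividing the edge joining `c` to the barycenter
`v_{σ_i}` transforms the cone `c·b(L, K)` into a complex isomorphic to
`b(cL, cK)`.  In particular `b(cL, cK)` is an iterated edge subdivision of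
`c·b(L, K)`. -/
theorem cone_relbary_subdiv_to_relbary_cone
    {V : Type} [Fintype V] (L K : SCplx V)
    (hL : IsComplex L) (hKL : K ⊆ L) (hK : IsComplex K)
    (m : ℕ) (σ : Fin m → Finset V)
    (henum : ∀ s : Finset V, (s ∈ L ∧ s ∉ K) ↔ ∃ i, σ i = s)
    (hinj : Function.Injective σ)
    (hmono : ∀ i j : Fin m, i ≤ j → (σ j).card ≤ (σ i).card) :
    ∃ C : (i : ℕ) → SCplx (Tower (Option (Finset V)) i),
      C 0 = cone (relbary L K) ∧
      (∀ i : Fin m,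
        IsEdge (C i)
          (({none, some (σ i)} : Finset (Option (Finset V))).image
            (towerEmb (Option (Finset V)) i)) ∧
        C (i + 1) = subdiv (C i)
          (({none, some (σ i)} : Finset (Option (Finset V))).image
            (towerEmb (Option (Finset V)) i))) ∧
      Isom (C m) (relbary (cone L) (cone K)) ∧
      IterSub (cone (relbary L K)) (relbary (cone L) (cone K)) := by
  -- extend the enumeration to all naturals; values beyond `m` are never used
  set σ' : ℕ → Finset V := fun i => if h : i < m then σ ⟨i, h⟩ else ∅ with hσ'
  have hval : ∀ i (h : i < m), σ' i = σ ⟨i, h⟩ := fun i h => by simp [hσ', h]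
  have henum' : ∀ s, (s ∈ L ∧ s ∉ K) ↔ ∃ i < m, σ' i = s := by
    intro s
    rw [henum]
    constructor
    · rintro ⟨i, rfl⟩
      exact ⟨i, i.2, hval i i.2⟩
    · rintro ⟨i, h, rfl⟩
      exact ⟨⟨i, h⟩, (hval i h).symm⟩
  have hne : ∀ i < m, (σ' i).Nonempty := fun i h =>
    hL.1 _ ((henum' _).2 ⟨i, h, rfl⟩).1
  have hinj' : ∀ i < m, ∀ j < m, σ' i = σ' j → i = j := by
    intro i hi j hj h
    rw [hval i hi, hval j hj] at h
    exact congrArg Fin.val (hinj h)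
  have hmono' : ∀ i j, i ≤ j → j < m → (σ' j).card ≤ (σ' i).card := by
    intro i j hij hj
    rw [hval i (by omega), hval j hj]
    exact hmono _ _ hij
  have hstep := fun i (hi : i < m) => stage_succ hK henum' hne hinj' hmono' hi
  have hiso : Isom (stage L K σ' m) (relbary (cone L) (cone K)) := by
    rw [relbary_cone_eq hL hKL hK henum']
    exact isom_semi (lab σ' m) (lab_injective hne hinj' m le_rfl) (lab_surj m)
  have hiter : ∀ k i, i + k = m → IterSub (stage L K σ' i) (relbary (cone L) (cone K)) := by
    intro k
    induction k with
    | zero =>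
      rintro i rfl
      exact IterSub.iso hiso
    | succ k ih =>
      intro i hi
      obtain ⟨h1, h2⟩ := hstep i (by omega)
      have h3 := ih (i + 1) (by omega)
      rw [h2] at h3
      exact IterSub.step _ h1 h3
  refine ⟨stage L K σ', stage_zero hL hKL hK, fun i => ?_, hiso, ?_⟩
  · have := hstep i i.2
    rw [hval i i.2] at this
    exact this
  · rw [← stage_zero (σ := σ') hL hKL hK]
    exact hiter m 0 (by omega)
end

section
/- Let b(L, K) be the relative barycentric subdivision of a simplicial pair (L, K). (1) If v = v_σ is the barycenter of a simplex σ ∈ L ∖ K, then the link Lk_{b(L,K)} v is isomorphic to the join b(∂σ, ∂σ ∩ K) * b(Lk_L σ), where ∂σ is the complex of proper nonempty subsets of σ and b(Lk_L σ) = b(Lk_L σ, ∅) is the barycentric subdivision of Lk_L σ. (2) If v is a vertex of K, then Lk_{b(L,K)} v is isomorphic to b(Lk_L v, Lk_K v). -/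
/-!
A face of `b(L, K)` is encoded by a pair `(τ, c)`: a simplex `τ` of `K` (or `∅`), contributing its
vertices, and a chain `c` of simplices of `L ∖ K`, all of which contain `τ`. The predicate `Spans`
records this encoding, and both isomorphisms are given by explicit vertex maps.

For the barycenter of `σ ∈ L ∖ K`, a face `(τ, c)` together with `σ` is a face exactly when
`τ ⊆ σ` and `c` is comparable with `σ`. Members strictly below `σ` (including the vertices of `τ`)
form a face of `b(∂σ, ∂σ ∩ K)`; members `ρ` strictly above `σ` correspond to the simplices `ρ \ σ` of
`Lk_L σ`, with inverse `ρ' ↦ ρ' ∪ σ`. None of the `ρ' ∪ σ` lies in `K` because `σ` does not, which is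
why the second factor is an absolute subdivision.

For a vertex `v` of `K`, a face `(τ, c)` together with `v` is a face exactly when `τ ∪ {v}` is a
simplex of `K` contained in all members of `c`. The map `t ↦ t \ {v}` removes `v` from the members
of `c` and fixes the other vertices of `τ`. It is injective on vertices of the link:
`{w}` and `{v, w}` cannot both occur, since the first requires `{v, w} ∈ K` and the second
`{v, w} ∉ K`.

In both cases `isom_of_injOn` reduces the isomorphism to injectivity on vertices and to the
correspondence of faces.
-/

open scoped Classical

/-! ### Faces of a relative barycentric subdivision -/

/-- `S` is the set of vertices of `b(L, K)` encoded by the simplex `τ` of `K` (or `∅`) and the chain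
`c` in `L ∖ K` lying above `τ`. -/
def Spans {V : Type} (L K : SCplx V) (S : Finset (Finset V)) (τ : Finset V)
    (c : Finset (Finset V)) : Prop :=
  (τ = ∅ ∨ τ ∈ K) ∧ (∀ σ ∈ c, σ ∈ L ∧ σ ∉ K) ∧
    (∀ σ ∈ c, ∀ σ' ∈ c, σ ⊆ σ' ∨ σ' ⊆ σ) ∧ (∀ σ ∈ c, τ ⊆ σ) ∧
    ∀ x, x ∈ S ↔ x ∈ c ∨ ∃ v ∈ τ, x = {v}

theorem mem_relbary_iff {V : Type} {L K : SCplx V} {S : Finset (Finset V)} :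
    S ∈ relbary L K ↔ S.Nonempty ∧ ∃ τ c, Spans L K S τ c := by
  unfold relbary Spans
  simp only [Set.mem_ofPred_eq, Finset.ext_iff (s₁ := S), Finset.mem_union, Finset.mem_image]
  simp only [or_comm (b := _ ∈ (_ : Finset (Finset V))), eq_comm (b := ({_} : Finset V))]

theorem eq_empty_or_mem_relbary_iff {V : Type} {L K : SCplx V} {S : Finset (Finset V)} :
    (S = ∅ ∨ S ∈ relbary L K) ↔ ∃ τ c, Spans L K S τ c := by
  rw [mem_relbary_iff]
  rcases S.eq_empty_or_nonempty with rfl | h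
  · simp only [true_or, true_iff]
    exact ⟨∅, ∅, by simp [Spans]⟩
  · simp [h, h.ne_empty]

theorem isComplex_relbary {V : Type} {L K : SCplx V} (hK : IsComplex K) :
    IsComplex (relbary L K) := by
  refine ⟨fun s hs => hs.1, fun S hS T hTS hT => ?_⟩
  rw [mem_relbary_iff] at hS ⊢
  obtain ⟨-, τ, c, h1, h2, h3, h4, h5⟩ := hS
  refine ⟨hT, τ.filter (fun v => {v} ∈ T), c.filter (· ∈ T), ?_, ?_, ?_, ?_, ?_⟩
  · rcases Finset.eq_empty_or_nonempty (τ.filter (fun v => {v} ∈ T)) with h | h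
    · exact Or.inl h
    · refine Or.inr (hK.2 τ ?_ _ (Finset.filter_subset _ _) h)
      rcases h1 with rfl | h1
      · simp at h
      · exact h1
  · intro σ hσ
    exact h2 σ (Finset.mem_filter.1 hσ).1
  · intro σ hσ σ' hσ'
    exact h3 σ (Finset.mem_filter.1 hσ).1 σ' (Finset.mem_filter.1 hσ').1
  · intro σ hσ
    exact (Finset.filter_subset _ _).trans (h4 σ (Finset.mem_filter.1 hσ).1)
  · intro x
    simp only [Finset.mem_filter]
    constructor
    · intro hx
      rcases (h5 x).1 (hTS hx) with h | ⟨v, hv, rfl⟩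
      · exact Or.inl ⟨h, hx⟩
      · exact Or.inr ⟨v, ⟨hv, hx⟩, rfl⟩
    · rintro (h | ⟨v, hv, rfl⟩)
      · exact h.2
      · exact hv.2

theorem isComplex_link {V : Type} {L : SCplx V} (hL : IsComplex L) (σ : Finset V) :
    IsComplex (link L σ) := by
  refine ⟨fun s hs => hL.1 s hs.1, fun s hs t hts ht => ⟨hL.2 s hs.1 t hts ht, ?_, ?_⟩⟩
  · exact Finset.disjoint_of_subset_left hts hs.2.1
  · exact hL.2 _ hs.2.2 _ (Finset.union_subset_union_left hts) (ht.mono Finset.subset_union_left)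

/-! ### Joins and isomorphisms -/

theorem mem_join_iff {V W : Type} {L₁ : SCplx V} {L₂ : SCplx W} {s : Finset (V ⊕ W)} :
    s ∈ join L₁ L₂ ↔ ∃ (s₁ : Finset V) (s₂ : Finset W), (s₁ = ∅ ∨ s₁ ∈ L₁) ∧
      (s₂ = ∅ ∨ s₂ ∈ L₂) ∧ (s₁.Nonempty ∨ s₂.Nonempty) ∧
      ∀ y, y ∈ s ↔ (∃ x ∈ s₁, Sum.inl x = y) ∨ ∃ x ∈ s₂, Sum.inr x = y := by
  simp only [join, Set.mem_ofPred_eq, Finset.ext_iff (s₁ := s), Finset.mem_union, Finset.mem_image]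

/-- Bijectivity on vertices follows from injectivity, since the vertices are the faces with one
element and the source is closed under passing to subsets. Images are described by membership, so
that no choice of decidability instance enters. -/
theorem isom_of_injOn {V W : Type} {L : SCplx V} {L' : SCplx W} (hL : IsComplex L) (f : V → W)
    (hf : Set.InjOn f (verts L))
    (h1 : ∀ s ∈ L, ∀ t : Finset W, (∀ y, y ∈ t ↔ ∃ x ∈ s, f x = y) → t ∈ L')
    (h2 : ∀ t ∈ L', ∃ s ∈ L, ∀ y, y ∈ t ↔ ∃ x ∈ s, f x = y) : Isom L L' := by
  refine ⟨f, ⟨fun x hx => ?_, hf, fun w hw => ?_⟩, fun s hs => h1 s hs _ (by simp),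
    fun t ht => ?_⟩
  · exact h1 _ hx _ (by simp [eq_comm])
  · obtain ⟨s, hs, hsw⟩ := h2 _ hw
    obtain ⟨x, hx, hxw⟩ := (hsw w).1 (by simp)
    exact ⟨x, hL.2 s hs _ (by simpa using hx) (by simp), hxw⟩
  · obtain ⟨s, hs, hst⟩ := h2 t ht
    exact ⟨s, hs, by ext y; simp [hst]⟩

/-! ### Faces of the links -/

/-- A face of the link of a barycenter `v_σ` is encoded by a simplex `τ ⊂ σ` of `K` (or `∅`) and a
chain `c` all of whose members are comparable with, and distinct from, `σ`. -/
theorem mem_link_barycenter {V : Type} {L K : SCplx V} (hL : IsComplex L)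
    (hK : IsComplex K) {σ : Finset V} (hσL : σ ∈ L) (hσK : σ ∉ K) {T : Finset (Finset V)} :
    T ∈ link (relbary L K) {σ} ↔ T.Nonempty ∧ ∃ τ c, Spans L K T τ c ∧ τ ⊂ σ ∧
      ∀ t ∈ c, t ⊂ σ ∨ σ ⊂ t := by
  constructor
  · rintro ⟨hT, hd, hu⟩
    have hσT : σ ∉ T := by simpa using hd
    obtain ⟨-, τ, c, h1, h2, h3, h4, h5⟩ := mem_relbary_iff.1 hu
    have hs : ∀ v ∈ τ, ({v} : Finset V) ∈ K := by
      intro v hv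
      rcases h1 with rfl | h1
      · simp at hv
      · exact hK.2 τ h1 _ (by simpa using hv) (by simp)
    have hσc : σ ∈ c := by
      rcases (h5 σ).1 (by simp) with h | ⟨v, hv, rfl⟩
      · exact h
      · exact absurd (hs v hv) hσK
    refine ⟨hT.1, τ, c.erase σ, ⟨h1, ?_, ?_, ?_, ?_⟩, ?_, ?_⟩
    · intro t ht
      exact h2 t (Finset.mem_of_mem_erase ht)
    · intro t ht t' ht'
      exact h3 t (Finset.mem_of_mem_erase ht) t' (Finset.mem_of_mem_erase ht')
    · intro t ht
      exact h4 t (Finset.mem_of_mem_erase ht)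
    · intro x
      have := h5 x
      simp only [Finset.mem_union, Finset.mem_singleton, Finset.mem_erase] at this ⊢
      constructor
      · intro hx
        rcases this.1 (Or.inl hx) with h | h
        · exact Or.inl ⟨fun e => hσT (e ▸ hx), h⟩
        · exact Or.inr h
      · rintro (⟨hne, h⟩ | ⟨v, hv, rfl⟩)
        · exact (this.2 (Or.inl h)).resolve_right hne
        · refine (this.2 (Or.inr ⟨v, hv, rfl⟩)).resolve_right ?_
          rintro rfl
          exact hσK (hs v hv)
    · refine (h4 σ hσc).ssubset_of_ne ?_
      rintro rfl
      rcases h1 with rfl | h1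
      · exact Finset.not_nonempty_empty (hL.1 _ hσL)
      · exact hσK h1
    · intro t ht
      obtain ⟨hne, ht⟩ := Finset.mem_erase.1 ht
      rcases h3 t ht σ hσc with h | h
      · exact Or.inl (h.ssubset_of_ne hne)
      · exact Or.inr (h.ssubset_of_ne (Ne.symm hne))
  · rintro ⟨hT, τ, c, ⟨h1, h2, h3, h4, h5⟩, hτ, hc⟩
    refine ⟨mem_relbary_iff.2 ⟨hT, τ, c, h1, h2, h3, h4, h5⟩, ?_,
      mem_relbary_iff.2 ⟨by simp, τ, insert σ c, h1, ?_, ?_, ?_, ?_⟩⟩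
    · rw [Finset.disjoint_singleton_right, h5]
      rintro (h | ⟨v, hv, rfl⟩)
      · rcases hc σ h with h | h <;> exact h.ne rfl
      · rcases h1 with rfl | h1
        · simp at hv
        · exact hσK (hK.2 τ h1 _ (by simpa using hv) (by simp))
    · simpa [hσL, hσK] using h2
    · intro t ht t' ht'
      rw [Finset.mem_insert] at ht ht'
      rcases ht with rfl | ht <;> rcases ht' with rfl | ht'
      · exact Or.inl subset_rfl
      · exact (hc t' ht').symm.imp (·.subset) (·.subset)
      · exact (hc t ht).imp (·.subset) (·.subset)
      · exact h3 t ht t' ht'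
    · simpa [hτ.subset] using h4
    · intro x
      simp only [Finset.mem_union, h5, Finset.mem_singleton, Finset.mem_insert]
      generalize (∃ v ∈ τ, x = {v}) = P
      tauto

/-- A face of the link of a vertex `v` of `K` is encoded by a simplex `τ` of `Lk_K v` (or `∅`) and a
chain `c` all of whose members contain `v`. -/
theorem mem_link_vertex {V : Type} {L K : SCplx V} (hK : IsComplex K)
    {v : V} (hv : {v} ∈ K) {T : Finset (Finset V)} :
    T ∈ link (relbary L K) {{v}} ↔ T.Nonempty ∧ ∃ τ c, Spans L K T τ c ∧
      (τ = ∅ ∨ τ ∈ link K {v}) ∧ ∀ t ∈ c, v ∈ t := by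
  constructor
  · rintro ⟨hT, hd, hu⟩
    have hvT : {v} ∉ T := by simpa using hd
    obtain ⟨-, τ, c, h1, h2, h3, h4, h5⟩ := mem_relbary_iff.1 hu
    have hvτ : v ∈ τ := by
      rcases (h5 {v}).1 (by simp) with h | ⟨w, hw, e⟩
      · exact absurd hv (h2 _ h).2
      · rwa [Finset.singleton_injective e]
    have hτ : τ ∈ K := by
      rcases h1 with rfl | h1
      · simp at hvτ
      · exact h1
    have he : τ.erase v = ∅ ∨ τ.erase v ∈ link K {v} := by
      rcases (τ.erase v).eq_empty_or_nonempty with h | h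
      · exact Or.inl h
      · refine Or.inr ⟨hK.2 τ hτ _ (Finset.erase_subset _ _) h, by simp, ?_⟩
        convert hτ
        ext x
        by_cases x = v <;> simp_all
    refine ⟨hT.1, τ.erase v, c, ⟨he.imp id (·.1), h2, h3, ?_, ?_⟩, he, ?_⟩
    · intro t ht
      exact (Finset.erase_subset _ _).trans (h4 t ht)
    · intro x
      have := h5 x
      simp only [Finset.mem_union, Finset.mem_singleton, Finset.mem_erase] at this ⊢
      constructor
      · intro hx
        rcases this.1 (Or.inl hx) with h | ⟨w, hw, rfl⟩
        · exact Or.inl h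
        · refine Or.inr ⟨w, ⟨?_, hw⟩, rfl⟩
          rintro rfl
          exact hvT hx
      · rintro (h | ⟨w, ⟨hwv, hw⟩, rfl⟩)
        · refine (this.2 (Or.inl h)).resolve_right ?_
          rintro rfl
          exact (h2 _ h).2 hv
        · exact (this.2 (Or.inr ⟨w, hw, rfl⟩)).resolve_right
            fun e => hwv (Finset.singleton_injective e)
    · intro t ht
      exact h4 t ht hvτ
  · rintro ⟨hT, τ, c, ⟨h1, h2, h3, h4, h5⟩, hτ, hc⟩
    refine ⟨mem_relbary_iff.2 ⟨hT, τ, c, h1, h2, h3, h4, h5⟩, ?_,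
      mem_relbary_iff.2 ⟨by simp, insert v τ, c, ?_, h2, h3, ?_, ?_⟩⟩
    · rw [Finset.disjoint_singleton_right, h5]
      rintro (h | ⟨w, hw, e⟩)
      · exact (h2 _ h).2 hv
      · obtain rfl := Finset.singleton_injective e
        rcases hτ with rfl | hτ
        · simp at hw
        · exact Finset.disjoint_singleton_right.1 hτ.2.1 hw
    · right
      rcases hτ with rfl | hτ
      · simpa using hv
      · have := hτ.2.2
        rwa [Finset.union_comm, ← Finset.insert_eq] at this
    · intro t ht
      exact Finset.insert_subset (hc t ht) (h4 t ht)
    · intro x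
      simp only [Finset.mem_union, h5, Finset.mem_singleton, Finset.mem_insert]
      simp only [or_and_right, exists_or, exists_eq_left]
      generalize (∃ w ∈ τ, x = {w}) = P
      tauto

/-! ### The link of a barycenter -/

theorem link_barycenter {V : Type} {L K : SCplx V} (hL : IsComplex L) (hK : IsComplex K)
    {σ : Finset V} (hσL : σ ∈ L) (hσK : σ ∉ K) :
    Isom (link (relbary L K) {σ})
      (join (relbary (bdry σ) (bdry σ ∩ K)) (relbary (link L σ) (∅ : SCplx V))) := by
  -- Members below `σ` go to the first factor unchanged; members above lose the vertices of `σ`.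
  set f : Finset V → Finset V ⊕ Finset V :=
    fun t => if t ⊂ σ then Sum.inl t else Sum.inr (t \ σ) with hf
  have hσ0 : σ.Nonempty := hL.1 σ hσL
  have hin : ∀ t, t ⊂ σ → f t = Sum.inl t := fun t ht => by simp [hf, ht]
  have hout : ∀ t, σ ⊂ t → f t = Sum.inr (t \ σ) := fun t ht => by
    simp [hf, not_ssubset_of_subset ht.subset]
  -- A vertex of `τ` is a proper subset of `σ`.
  have hsing : ∀ τ, τ = ∅ ∨ τ ∈ K → τ ⊂ σ → ∀ v ∈ τ, ({v} : Finset V) ⊂ σ := by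
    intro τ h1 hτ v hv
    exact (Finset.singleton_subset_iff.2 hv).trans_ssubset hτ
  refine isom_of_injOn (isComplex_link (isComplex_relbary hK) _) f ?_ ?_ ?_
  · have key : ∀ x ∈ verts (link (relbary L K) {σ}), x ⊂ σ ∨ σ ⊂ x := by
      intro x hx
      obtain ⟨-, τ, c, ⟨h1, h2, h3, h4, h5⟩, hτ, hc⟩ := (mem_link_barycenter hL hK hσL hσK).1 hx
      rcases (h5 x).1 (by simp) with h | ⟨v, hv, rfl⟩
      · exact hc x h
      · exact Or.inl (hsing τ h1 hτ v hv)
    intro x hx y hy hxy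
    rcases key x hx with h | h <;> rcases key y hy with h' | h'
    · rw [hin x h, hin y h'] at hxy
      exact Sum.inl_injective hxy
    · rw [hin x h, hout y h'] at hxy
      cases hxy
    · rw [hout x h, hin y h'] at hxy
      cases hxy
    · rw [hout x h, hout y h'] at hxy
      rw [← Finset.sdiff_union_of_subset h.subset, ← Finset.sdiff_union_of_subset h'.subset,
        Sum.inr_injective hxy]
  · intro T hT T' hT'
    obtain ⟨hT0, τ, c, ⟨h1, h2, h3, h4, h5⟩, hτ, hc⟩ := (mem_link_barycenter hL hK hσL hσK).1 hT
    have hcmp : ∀ x ∈ T, x ⊂ σ ∨ σ ⊂ x := by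
      intro x hx
      rcases (h5 x).1 hx with h | ⟨v, hv, rfl⟩
      · exact hc x h
      · exact Or.inl (hsing τ h1 hτ v hv)
    have himg : ∀ y, y ∈ T' ↔ (∃ x ∈ T.filter (· ⊂ σ), Sum.inl x = y) ∨
        ∃ x ∈ (T.filter (σ ⊂ ·)).image (· \ σ), Sum.inr x = y := by
      intro y
      rw [hT']
      simp only [Finset.mem_image, Finset.mem_filter]
      constructor
      · rintro ⟨x, hx, rfl⟩
        rcases hcmp x hx with h | h
        · exact Or.inl ⟨x, ⟨hx, h⟩, (hin x h).symm⟩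
        · exact Or.inr ⟨_, ⟨x, ⟨hx, h⟩, rfl⟩, (hout x h).symm⟩
      · rintro (⟨x, ⟨hx, h⟩, rfl⟩ | ⟨_, ⟨x, ⟨hx, h⟩, rfl⟩, rfl⟩)
        · exact ⟨x, hx, hin x h⟩
        · exact ⟨x, hx, hout x h⟩
    refine mem_join_iff.2 ⟨_, _, ?_, ?_, ?_, himg⟩
    · refine eq_empty_or_mem_relbary_iff.2 ⟨τ, c.filter (· ⊂ σ), ?_, ?_, ?_, ?_, ?_⟩
      · exact h1.imp id fun h => ⟨⟨hτ, hK.1 τ h⟩, h⟩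
      · intro t ht
        obtain ⟨ht, hts⟩ := Finset.mem_filter.1 ht
        exact ⟨⟨hts, hL.1 t (h2 t ht).1⟩, fun h => (h2 t ht).2 h.2⟩
      · intro t ht t' ht'
        exact h3 t (Finset.mem_filter.1 ht).1 t' (Finset.mem_filter.1 ht').1
      · intro t ht
        exact h4 t (Finset.mem_filter.1 ht).1
      · intro x
        simp only [Finset.mem_filter, h5]
        constructor
        · rintro ⟨h | h, hx⟩
          · exact Or.inl ⟨h, hx⟩
          · exact Or.inr h
        · rintro (⟨h, hx⟩ | ⟨v, hv, rfl⟩)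
          · exact ⟨Or.inl h, hx⟩
          · exact ⟨Or.inr ⟨v, hv, rfl⟩, hsing τ h1 hτ v hv⟩
    · refine eq_empty_or_mem_relbary_iff.2
        ⟨∅, (c.filter (σ ⊂ ·)).image (· \ σ), Or.inl rfl, ?_, ?_, by simp, ?_⟩
      · intro t ht
        simp only [Finset.mem_image, Finset.mem_filter] at ht
        obtain ⟨t, ⟨ht, hts⟩, rfl⟩ := ht
        refine ⟨⟨hL.2 t (h2 t ht).1 _ Finset.sdiff_subset ?_, Finset.sdiff_disjoint, ?_⟩, by simp⟩
        · exact Finset.sdiff_nonempty.2 (not_subset_of_ssubset hts)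
        · rw [Finset.sdiff_union_of_subset hts.subset]
          exact (h2 t ht).1
      · intro t ht t' ht'
        simp only [Finset.mem_image, Finset.mem_filter] at ht ht'
        obtain ⟨t, ⟨ht, hts⟩, rfl⟩ := ht
        obtain ⟨t', ⟨ht', hts'⟩, rfl⟩ := ht'
        exact (h3 t ht t' ht').imp (Finset.sdiff_subset_sdiff · subset_rfl)
          (Finset.sdiff_subset_sdiff · subset_rfl)
      · intro x
        simp only [Finset.mem_image, Finset.mem_filter, h5, Finset.notMem_empty, false_and,
          exists_false, or_false]
        constructor
        · rintro ⟨t, ⟨h | ⟨v, hv, rfl⟩, ht⟩, rfl⟩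
          · exact ⟨t, ⟨h, ht⟩, rfl⟩
          · exact absurd ht (not_ssubset_of_subset (hsing τ h1 hτ v hv).subset)
        · rintro ⟨t, ⟨h, ht⟩, rfl⟩
          exact ⟨t, ⟨Or.inl h, ht⟩, rfl⟩
    · obtain ⟨x, hx⟩ := hT0
      rcases hcmp x hx with h | h
      · exact Or.inl ⟨x, by simp [hx, h]⟩
      · exact Or.inr ⟨x \ σ, Finset.mem_image_of_mem (· \ σ) (by simp [hx, h])⟩
  · intro T hT
    obtain ⟨s₁, s₂, hs₁, hs₂, hne, hT⟩ := mem_join_iff.1 hT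
    obtain ⟨τ, c, h1, h2, h3, h4, h5⟩ := eq_empty_or_mem_relbary_iff.1 hs₁
    obtain ⟨τ', c', h1', h2', h3', h4', h5'⟩ := eq_empty_or_mem_relbary_iff.1 hs₂
    obtain rfl : τ' = ∅ := h1'.resolve_right (by simp)
    obtain rfl : s₂ = c' := by ext x; simp [h5']
    have hτ : τ ⊂ σ := by
      rcases h1 with rfl | h1
      · exact Finset.empty_ssubset.2 hσ0
      · exact h1.1.1
    have h1K : τ = ∅ ∨ τ ∈ K := h1.imp id (·.2)
    have hlow : ∀ x ∈ s₁, x ⊂ σ := by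
      intro x hx
      rcases (h5 x).1 hx with h | ⟨v, hv, rfl⟩
      · exact (h2 x h).1.1
      · exact hsing τ h1K hτ v hv
    have hhigh : ∀ x ∈ s₂, σ ⊂ x ∪ σ := by
      intro x hx
      refine Finset.subset_union_right.ssubset_of_ne fun e => ?_
      obtain ⟨y, hy⟩ := hL.1 x (h2' x hx).1.1
      exact Finset.disjoint_left.1 (h2' x hx).1.2.1 hy (e ▸ Finset.mem_union_left _ hy)
    refine ⟨s₁ ∪ s₂.image (· ∪ σ), ?_, ?_⟩
    · refine (mem_link_barycenter hL hK hσL hσK).2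
        ⟨?_, τ, c ∪ s₂.image (· ∪ σ), ⟨h1K, ?_, ?_, ?_, ?_⟩, hτ, ?_⟩
      · rcases hne with h | h
        · exact h.mono Finset.subset_union_left
        · exact (h.image _).mono Finset.subset_union_right
      · intro t ht
        simp only [Finset.mem_union, Finset.mem_image] at ht
        rcases ht with ht | ⟨t, ht, rfl⟩
        · have := h2 t ht
          exact ⟨hL.2 σ hσL t this.1.1.subset this.1.2, fun h => this.2 ⟨this.1, h⟩⟩
        · exact ⟨(h2' t ht).1.2.2, fun h => hσK (hK.2 _ h σ Finset.subset_union_right hσ0)⟩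
      · intro t ht t' ht'
        simp only [Finset.mem_union, Finset.mem_image] at ht ht'
        rcases ht with ht | ⟨t, ht, rfl⟩ <;> rcases ht' with ht' | ⟨t', ht', rfl⟩
        · exact h3 t ht t' ht'
        · exact Or.inl ((h2 t ht).1.1.subset.trans Finset.subset_union_right)
        · exact Or.inr ((h2 t' ht').1.1.subset.trans Finset.subset_union_right)
        · exact (h3' t ht t' ht').imp Finset.union_subset_union_left
            Finset.union_subset_union_left
      · intro t ht
        simp only [Finset.mem_union, Finset.mem_image] at ht
        rcases ht with ht | ⟨t, ht, rfl⟩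
        · exact h4 t ht
        · exact hτ.subset.trans Finset.subset_union_right
      · intro x
        simp only [Finset.mem_union, h5]
        generalize (∃ v ∈ τ, x = {v}) = P
        tauto
      · intro t ht
        simp only [Finset.mem_union, Finset.mem_image] at ht
        rcases ht with ht | ⟨t, ht, rfl⟩
        · exact Or.inl (h2 t ht).1.1
        · exact Or.inr (hhigh t ht)
    · have hd : ∀ x ∈ s₂, f (x ∪ σ) = Sum.inr x := by
        intro x hx
        rw [hout _ (hhigh x hx), Finset.union_sdiff_cancel_right (h2' x hx).1.2.1]
      intro y
      rw [hT, iff_comm]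
      simp only [Finset.mem_image, Finset.mem_union]
      constructor
      · rintro ⟨_, hx | ⟨x, hx, rfl⟩, rfl⟩
        · exact Or.inl ⟨_, hx, (hin _ (hlow _ hx)).symm⟩
        · exact Or.inr ⟨x, hx, (hd x hx).symm⟩
      · rintro (⟨x, hx, rfl⟩ | ⟨x, hx, rfl⟩)
        · exact ⟨x, Or.inl hx, hin x (hlow x hx)⟩
        · exact ⟨_, Or.inr ⟨x, hx, rfl⟩, hd x hx⟩

/-! ### The link of a vertex of the subcomplex -/

theorem link_vertex {V : Type} {L K : SCplx V} (hL : IsComplex L) (hK : IsComplex K)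
    {v : V} (hv : {v} ∈ K) :
    Isom (link (relbary L K) {{v}}) (relbary (link L {v}) (link K {v})) := by
  have hne : ∀ τ, τ = ∅ ∨ τ ∈ link K {v} → ∀ w ∈ τ, w ≠ v := by
    rintro τ (rfl | h) w hw rfl
    · simp at hw
    · exact Finset.disjoint_singleton_right.1 h.2.1 hw
  have hs : ∀ w, w ≠ v → ({w} : Finset V).erase v = {w} := fun w hw =>
    Finset.erase_eq_of_notMem (by simpa using hw.symm)
  -- `{v, w} ∈ K` for every vertex `w` of `τ`
  have hpair : ∀ τ, τ = ∅ ∨ τ ∈ link K {v} → ∀ w ∈ τ, insert v {w} ∈ K := by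
    rintro τ (rfl | h) w hw
    · simp at hw
    · refine hK.2 _ h.2.2 _ ?_ (by simp)
      intro x hx
      simp only [Finset.mem_insert, Finset.mem_singleton] at hx
      rcases hx with rfl | rfl <;> simp [hw]
  refine isom_of_injOn (isComplex_link (isComplex_relbary hK) _) (fun t => t.erase v) ?_ ?_ ?_
  · -- A vertex `x` of the link either contains `v` and is outside `K`, or is some `{w}` with
    -- `w ≠ v` and `{v, w} ∈ K`.
    have key : ∀ x ∈ verts (link (relbary L K) {{v}}),
        (v ∈ x ∧ x ∉ K) ∨ (v ∉ x ∧ insert v x ∈ K) := by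
      intro x hx
      obtain ⟨-, τ, c, ⟨h1, h2, h3, h4, h5⟩, hτ, hc⟩ := (mem_link_vertex hK hv).1 hx
      rcases (h5 x).1 (by simp) with h | ⟨w, hw, rfl⟩
      · exact Or.inl ⟨hc x h, (h2 x h).2⟩
      · exact Or.inr ⟨by simpa using (hne τ hτ w hw).symm, hpair τ hτ w hw⟩
    intro x hx y hy hxy
    have hxy : x.erase v = y.erase v := hxy
    rcases key x hx with h | h <;> rcases key y hy with h' | h'
    · rw [← Finset.insert_erase h.1, hxy, Finset.insert_erase h'.1]
    · rw [Finset.erase_eq_of_notMem h'.1] at hxy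
      rw [← hxy, Finset.insert_erase h.1] at h'
      exact absurd h'.2 h.2
    · rw [Finset.erase_eq_of_notMem h.1] at hxy
      rw [hxy, Finset.insert_erase h'.1] at h
      exact absurd h.2 h'.2
    · rwa [Finset.erase_eq_of_notMem h.1, Finset.erase_eq_of_notMem h'.1] at hxy
  · intro T hT T' hT'
    obtain ⟨⟨x₀, hx₀⟩, τ, c, ⟨h1, h2, h3, h4, h5⟩, hτ, hc⟩ := (mem_link_vertex hK hv).1 hT
    have hun : ∀ t ∈ c, t.erase v ∪ {v} = t := fun t ht => by
      rw [Finset.union_comm, ← Finset.insert_eq, Finset.insert_erase (hc t ht)]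
    refine mem_relbary_iff.2 ⟨⟨_, (hT' _).2 ⟨x₀, hx₀, rfl⟩⟩, τ, c.image (fun t => t.erase v), hτ, ?_, ?_, ?_, ?_⟩
    · intro t ht
      rw [Finset.mem_image] at ht
      obtain ⟨t, ht, rfl⟩ := ht
      refine ⟨⟨hL.2 t (h2 t ht).1 _ (Finset.erase_subset _ _) ?_, by simp, ?_⟩, fun h => ?_⟩
      · -- otherwise `t = {v}`, which lies in `K`
        rw [Finset.nonempty_iff_ne_empty]
        intro e
        have := hun t ht
        rw [e, Finset.empty_union] at this
        exact (h2 t ht).2 (this ▸ hv)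
      · rw [hun t ht]
        exact (h2 t ht).1
      · have := h.2.2
        rw [hun t ht] at this
        exact (h2 t ht).2 this
    · intro t ht t' ht'
      rw [Finset.mem_image] at ht
      obtain ⟨t, ht, rfl⟩ := ht
      rw [Finset.mem_image] at ht'
      obtain ⟨t', ht', rfl⟩ := ht'
      exact (h3 t ht t' ht').imp (Finset.erase_subset_erase v) (Finset.erase_subset_erase v)
    · intro t ht
      rw [Finset.mem_image] at ht
      obtain ⟨t, ht, rfl⟩ := ht
      exact fun w hw => Finset.mem_erase.2 ⟨hne τ hτ w hw, h4 t ht hw⟩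
    · intro x
      simp only [hT', Finset.mem_image, h5]
      constructor
      · rintro ⟨t, h | ⟨w, hw, rfl⟩, rfl⟩
        · exact Or.inl ⟨t, h, rfl⟩
        · exact Or.inr ⟨w, hw, hs w (hne τ hτ w hw)⟩
      · rintro (⟨t, h, rfl⟩ | ⟨w, hw, rfl⟩)
        · exact ⟨t, Or.inl h, rfl⟩
        · exact ⟨{w}, Or.inr ⟨w, hw, rfl⟩, hs w (hne τ hτ w hw)⟩
  · intro T hT
    obtain ⟨hT0, τ, c, h1, h2, h3, h4, h5⟩ := mem_relbary_iff.1 hT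
    have hvt : ∀ t ∈ c, v ∉ t := fun t ht =>
      Finset.disjoint_singleton_right.1 (h2 t ht).1.2.1
    have hun : ∀ t : Finset V, t ∪ {v} = insert v t := fun t => by
      rw [Finset.union_comm, ← Finset.insert_eq]
    have himg : ∀ x, x ∈ T ↔ ∃ t ∈ τ.image (fun w => ({w} : Finset V)) ∪ c.image (insert v),
        t.erase v = x := by
      intro x
      rw [iff_comm]
      simp only [Finset.mem_image, Finset.mem_union, h5]
      constructor
      · rintro ⟨_, ⟨w, hw, rfl⟩ | ⟨t, ht, rfl⟩, rfl⟩
        · exact Or.inr ⟨w, hw, hs w (hne τ h1 w hw)⟩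
        · rw [Finset.erase_insert (hvt t ht)]
          exact Or.inl ht
      · rintro (ht | ⟨w, hw, rfl⟩)
        · exact ⟨_, Or.inr ⟨x, ht, rfl⟩, Finset.erase_insert (hvt x ht)⟩
        · exact ⟨_, Or.inl ⟨w, hw, rfl⟩, hs w (hne τ h1 w hw)⟩
    refine ⟨_, (mem_link_vertex hK hv).2
      ⟨?_, τ, c.image (insert v), ⟨h1.imp id (·.1), ?_, ?_, ?_, ?_⟩, h1, ?_⟩, himg⟩
    · obtain ⟨x, hx⟩ := hT0
      obtain ⟨t, ht, -⟩ := (himg x).1 hx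
      exact ⟨t, ht⟩
    · intro t ht
      rw [Finset.mem_image] at ht
      obtain ⟨t, ht, rfl⟩ := ht
      obtain ⟨hl, hk⟩ := h2 t ht
      refine ⟨hun t ▸ hl.2.2, fun h => hk ⟨?_, hl.2.1, (hun t).symm ▸ h⟩⟩
      exact hK.2 _ h _ (Finset.subset_insert _ _) (hL.1 t hl.1)
    · intro t ht t' ht'
      rw [Finset.mem_image] at ht
      obtain ⟨t, ht, rfl⟩ := ht
      rw [Finset.mem_image] at ht'
      obtain ⟨t', ht', rfl⟩ := ht'
      exact (h3 t ht t' ht').imp (Finset.insert_subset_insert v) (Finset.insert_subset_insert v)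
    · intro t ht
      rw [Finset.mem_image] at ht
      obtain ⟨t, ht, rfl⟩ := ht
      exact (h4 t ht).trans (Finset.subset_insert _ _)
    · intro x
      simp only [Finset.mem_union, Finset.mem_image, eq_comm (a := x)]
      exact or_comm
    · intro t ht
      rw [Finset.mem_image] at ht
      obtain ⟨t, ht, rfl⟩ := ht
      simp

/-- Lemma `l:links` of the paper: links of vertices in a relative
barycentric subdivision `b(L, K)`.
(1) For the barycenter `v_σ` of a simplex `σ ∈ L ∖ K`,
    `Lk_{b(L,K)} v_σ ≅ b(∂σ, ∂σ ∩ K) * b(Lk_L σ)`.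
(2) For a vertex `v` of `K`, `Lk_{b(L,K)} v ≅ b(Lk_L v, Lk_K v)`. -/
theorem link_relbary
    {V : Type} [Fintype V] (L K : SCplx V)
    (hL : IsComplex L) (hKL : K ⊆ L) (hK : IsComplex K) :
    (∀ σ : Finset V, σ ∈ L → σ ∉ K →
      Isom (link (relbary L K) ({σ} : Finset (Finset V)))
        (join (relbary (bdry σ) (bdry σ ∩ K)) (relbary (link L σ) (∅ : SCplx V)))) ∧
    (∀ v : V, ({v} : Finset V) ∈ K →
      Isom (link (relbary L K) ({({v} : Finset V)} : Finset (Finset V)))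
        (relbary (link L {v}) (link K {v}))) := by
  exact ⟨fun _ hσL hσK => link_barycenter hL hK hσL hσK, fun _ hv => link_vertex hL hK hv⟩
end

section
/- Let L be a simplicial complex, e = {v⁺, v⁻} an edge of L, v_e the new vertex of the edge subdivision Sub_e(L), and σ a simplex of Sub_e(L). Then: (1) if σ ∈ Lk_L e, then Lk_{Sub_e(L)} σ = Sub_e(Lk_L σ) (here e is an edge of Lk_L σ); (2) if σ = {v_e} ∪ τ with τ ∈ Lk_L e or τ = ∅, then Lk_{Sub_e(L)} σ equals the join of the two-point complex with vertices v⁺, v⁻ with Lk_L(e ∪ τ); (3) if σ = {v_e, v⁺} ∪ τ or σ = {v_e, v⁻} ∪ τ with τ ∈ Lk_L e or τ = ∅, then Lk_{Sub_e(L)} σ = Lk_L(e ∪ τ); (4) for every other simplex σ (i.e., σ a simplex of L not belonging to Lk_L e), Lk_{Sub_e(L)} σ is isomorphic to Lk_L σ. -/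
/-!
A set `o` of vertices of `Sub_e(L)` is described by two data: whether it contains the new vertex
`v_e`, and its set `s` of old vertices. It is a simplex exactly when `e ⊄ s` and, according to
whether `v_e ∈ o` or not, `s ∪ e ∈ L` or `s ∈ L` (`mem_subdiv_iff`). Taking unions, this gives the
analogous description of the link of any simplex (`mem_link_subdiv_iff`), and the first three
claims become identities between conditions on finite subsets of `V`.

For the last claim, choose an endpoint `w` of `e` outside `σ` and send `v_e` to `w`, fixing every
old vertex. If `σ ∪ e ∉ L`, the new vertex is not in the link of `σ`, no simplex of the star of `σ`
contains `e`, and the two links agree. Otherwise `σ` is not disjoint from `e`, so it contains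
the other endpoint; then `w` is not in the link of `σ` in `Sub_e(L)`, and `v_e` takes its place.
-/

open scoped Classical

/-- The image of a complex under a vertex map. -/
def mapC {V W : Type} (f : V → W) (L : SCplx V) : SCplx W := (fun s => s.image f) '' L

/-- The internal join of two subcomplexes on the same vertex type. -/
def joinIn {V : Type} (L₁ L₂ : SCplx V) : SCplx V :=
  {s | ∃ s₁ s₂ : Finset V, (s₁ = ∅ ∨ s₁ ∈ L₁) ∧ (s₂ = ∅ ∨ s₂ ∈ L₂) ∧
    s.Nonempty ∧ s = s₁ ∪ s₂}

/-- The two-point complex on the (images of the) endpoints `v⁺, v⁻` of the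
subdivided edge, inside the vertex set of `Sub_e(L)`. -/
def twoPt {V : Type} (v₁ v₂ : V) : SCplx (Option V) :=
  {s | s = {some v₁} ∨ s = {some v₂}}

/-! ### Links and edge subdivisions by membership -/

theorem link_mem_iff {V : Type} {L : SCplx V} (hL : IsComplex L) {σ τ : Finset V} :
    τ ∈ link L σ ↔ τ.Nonempty ∧ Disjoint τ σ ∧ τ ∪ σ ∈ L := by
  constructor
  · rintro ⟨h1, h2, h3⟩
    exact ⟨hL.1 _ h1, h2, h3⟩
  · rintro ⟨h1, h2, h3⟩
    exact ⟨hL.2 _ h3 _ Finset.subset_union_left h1, h2, h3⟩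

/-- The condition for a simplex of `Sub_e(L)` in terms of its set `s` of old vertices and of the
proposition `b` that it contains the new vertex. -/
def SubdivCond {V : Type} (L : SCplx V) (e : Finset V) (b : Prop) (s : Finset V) : Prop :=
  ¬ e ⊆ s ∧ (b → s ∪ e ∈ L) ∧ (¬ b → s ∈ L)

theorem mem_subdiv_iff_s7 {V : Type} {L : SCplx V} (hL : IsComplex L) {e : Finset V} (heL : e ∈ L)
    (o : Finset (Option V)) :
    o ∈ subdiv L e ↔ SubdivCond L e (none ∈ o) (Finset.eraseNone o) := by
  constructor
  · rintro (⟨τ, hτ, he, rfl⟩ | ⟨τ, f, hτ, hf, rfl⟩)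
    · have h : Finset.eraseNone (τ.image some) = τ := by ext; simp
      refine ⟨by rwa [h], fun hn => by simp at hn, fun _ => by rwa [h]⟩
    · have h : Finset.eraseNone (insert none ((τ ∪ f).image some)) = τ ∪ f := by ext; simp
      have hd : Disjoint τ e := by
        rcases hτ with rfl | hτ
        · simp
        · exact hτ.2.1
      refine ⟨?_, fun _ => ?_, fun hn => by simp at hn⟩
      · rw [h]
        intro hs
        refine hf.2 fun x hx => ?_
        rcases Finset.mem_union.1 (hs hx) with h' | h'
        · exact absurd hx (Finset.disjoint_left.1 hd h')
        · exact h'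
      · rw [h, Finset.union_assoc, Finset.union_eq_right.2 hf.1]
        rcases hτ with rfl | hτ
        · simpa using heL
        · exact hτ.2.2
  · rintro ⟨h1, h2, h3⟩
    by_cases hn : none ∈ o
    · right
      refine ⟨Finset.eraseNone o \ e, Finset.eraseNone o ∩ e, ?_, ?_, ?_⟩
      · rcases Finset.eq_empty_or_nonempty (Finset.eraseNone o \ e) with h | h
        · exact Or.inl h
        · right
          rw [link_mem_iff hL]
          refine ⟨h, Finset.sdiff_disjoint, ?_⟩
          rw [Finset.sdiff_union_self_eq_union]
          exact h2 hn
      · refine ⟨Finset.inter_subset_right, fun h => h1 (h.trans Finset.inter_subset_left)⟩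
      · rw [Finset.sdiff_union_inter]
        ext (_ | x) <;> simp [hn]
    · left
      refine ⟨_, h3 hn, h1, ?_⟩
      ext (_ | x) <;> simp [hn]

theorem isComplex_subdiv_s7 {V : Type} {L : SCplx V} (hL : IsComplex L) {e : Finset V}
    (heL : e ∈ L) : IsComplex (subdiv L e) := by
  constructor
  · rintro s (⟨τ, hτ, -, rfl⟩ | ⟨τ, f, -, -, rfl⟩)
    · exact (hL.1 _ hτ).image _
    · exact Finset.insert_nonempty _ _
  · intro s hs t hts ht
    rw [mem_subdiv_iff_s7 hL heL] at hs ⊢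
    obtain ⟨h1, h2, h3⟩ := hs
    have hsub : Finset.eraseNone t ⊆ Finset.eraseNone s := Finset.eraseNone.monotone hts
    refine ⟨fun h => h1 (h.trans hsub), fun h => ?_, fun h => ?_⟩
    · exact hL.2 _ (h2 (hts h)) _ (Finset.union_subset_union_left hsub)
        ((hL.1 _ heL).mono Finset.subset_union_right)
    · have hne : (Finset.eraseNone t).Nonempty := by
        obtain ⟨_ | x, hx⟩ := ht
        · exact absurd hx h
        · exact ⟨x, by simpa using hx⟩
      by_cases hn : none ∈ s
      · exact hL.2 _ (h2 hn) _ (hsub.trans Finset.subset_union_left) hne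
      · exact hL.2 _ (h3 hn) _ hsub hne

theorem mem_link_subdiv_iff {V : Type} {L : SCplx V} (hL : IsComplex L) {e : Finset V}
    (heL : e ∈ L) (o p : Finset (Option V)) :
    o ∈ link (subdiv L e) p ↔ (o.Nonempty ∧ Disjoint o p ∧
      SubdivCond L e (none ∈ o ∨ none ∈ p) (Finset.eraseNone o ∪ Finset.eraseNone p)) := by
  rw [link_mem_iff (isComplex_subdiv_s7 hL heL), mem_subdiv_iff_s7 hL heL]
  -- The union in `link` uses classical decidability of equality on `Option V`, which is not the
  -- instance found for `Option V`, so it is only accessed through `simp`.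
  refine and_congr_right fun _ => and_congr_right fun _ => iff_of_eq ?_
  congr 1
  · simp
  · ext x; simp

theorem mem_mapC_some {V : Type} {K : SCplx V} {o : Finset (Option V)} :
    o ∈ mapC some K ↔ ∃ t ∈ K, t.image some = o := by
  unfold mapC
  rw [Set.mem_image]
  refine exists_congr fun t => and_congr_right fun _ => ?_
  convert Iff.rfl

theorem eraseNone_image_some' {V : Type} (s : Finset V) :
    Finset.eraseNone (s.image some) = s := by ext; simp

theorem image_some_eraseNone' {V : Type} {o : Finset (Option V)} (h : none ∉ o) :
    (Finset.eraseNone o).image some = o := by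
  ext (_ | x) <;> simp [h]

theorem disjoint_image_some_iff {V : Type} (o : Finset (Option V)) (s : Finset V) :
    Disjoint o (s.image some) ↔ Disjoint (Finset.eraseNone o) s := by
  simp only [Finset.disjoint_left]
  constructor
  · intro h x hx hs
    exact h (Finset.mem_eraseNone.1 hx) (Finset.mem_image_of_mem _ hs)
  · rintro h (_ | x) hx hs
    · simp at hs
    · exact h (Finset.mem_eraseNone.2 hx) (by simpa using hs)

/-- Simplices of the link of `{v_e} ∪ τ`, for an arbitrary set `τ` of old vertices. -/
theorem mem_link_insert_none {V : Type} {L : SCplx V} (hL : IsComplex L) {e : Finset V}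
    (heL : e ∈ L) (o : Finset (Option V)) (τ : Finset V) :
    o ∈ link (subdiv L e) (insert none (τ.image some)) ↔
      ∃ s : Finset V, s.Nonempty ∧ Disjoint s τ ∧ ¬ e ⊆ s ∪ τ ∧ s ∪ τ ∪ e ∈ L ∧
        s.image some = o := by
  have h : Finset.eraseNone (insert none (τ.image some)) = τ := by ext; simp
  rw [mem_link_subdiv_iff hL heL, h, Finset.disjoint_insert_right, disjoint_image_some_iff]
  constructor
  · rintro ⟨h1, ⟨h2, h3⟩, h4, h5, -⟩
    have ho := image_some_eraseNone' h2
    refine ⟨Finset.eraseNone o, ?_, h3, h4, h5 (by simp), ho⟩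
    rwa [← ho, Finset.image_nonempty] at h1
  · rintro ⟨s, h1, h2, h3, h4, rfl⟩
    rw [eraseNone_image_some']
    exact ⟨h1.image _, ⟨by simp, h2⟩, h3, fun _ => h4, fun hn => by simp at hn⟩

/-! ### The isomorphism of links -/

/-- A vertex map which is injective on vertices and induces a surjection on simplices is an
isomorphism; the bijection on vertices is a consequence. -/
theorem isom_of_image {V W : Type} {L : SCplx V} {L' : SCplx W} (hL : IsComplex L)
    (f : V → W) (hinj : Set.InjOn f (verts L)) (h1 : ∀ s ∈ L, s.image f ∈ L')
    (h2 : ∀ t ∈ L', ∃ s ∈ L, s.image f = t) : Isom L L' := by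
  refine ⟨f, ⟨fun v hv => ?_, hinj, fun w hw => ?_⟩, h1, h2⟩
  · simpa [verts] using h1 _ hv
  · obtain ⟨s, hs, hsw⟩ := h2 _ hw
    obtain ⟨v, hv⟩ := hL.1 s hs
    refine ⟨v, hL.2 s hs _ (by simpa using hv) (by simp), ?_⟩
    have : f v ∈ s.image f := Finset.mem_image_of_mem _ hv
    rw [hsw] at this
    simpa using this

/-- The isomorphism of links sends `v_e` to `w` and fixes the old vertices. If `σ ∪ e ∉ L` then
`v_e` is not in the link of `σ`; otherwise `hσ` puts the rest of `e` inside `σ`, which keeps `w` out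
of the link in `Sub_e(L)`. -/
theorem isom_link_subdiv {V : Type} {L : SCplx V} (hL : IsComplex L) {e : Finset V}
    (heL : e ∈ L) {σ : Finset V} {w : V} (hwe : w ∈ e) (hwσ : w ∉ σ)
    (hσ : σ ∪ e ∈ L → ∀ x ∈ e, x = w ∨ x ∈ σ) :
    Isom (link (subdiv L e) (σ.image some)) (link L σ) := by
  have hmem : ∀ o, o ∈ link (subdiv L e) (σ.image some) ↔ o.Nonempty ∧
      Disjoint (Finset.eraseNone o) σ ∧ SubdivCond L e (none ∈ o) (Finset.eraseNone o ∪ σ) := by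
    intro o
    rw [mem_link_subdiv_iff hL heL, eraseNone_image_some', disjoint_image_some_iff]
    simp
  have hlow : ∀ s ∈ L, e ⊆ s → σ ⊆ s → σ ∪ e ∈ L := fun s hs he hσs =>
    hL.2 s hs _ (Finset.union_subset hσs he) ((hL.1 _ heL).mono Finset.subset_union_right)
  refine isom_of_image (isComplex_link (isComplex_subdiv_s7 hL heL) _) (fun o => o.getD w) ?_ ?_ ?_
  · -- `v_e` and `w` are never both vertices of the link of `σ` in the subdivision.
    have hex : {none} ∈ link (subdiv L e) (σ.image some) →
        {some w} ∈ link (subdiv L e) (σ.image some) → False := by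
      intro h1 h2
      have h3 := ((hmem _).1 h1).2.2.2.1 (by simp)
      have h4 := ((hmem _).1 h2).2.2.1
      have h5 := hσ (hlow _ h3 Finset.subset_union_right
        (Finset.subset_union_right.trans Finset.subset_union_left))
      refine h4 fun x hx => ?_
      rcases h5 x hx with rfl | h
      · simp
      · simp [h]
    rintro (_ | x) hx (_ | y) hy hxy
    · rfl
    · obtain rfl : w = y := hxy
      exact (hex hx hy).elim
    · obtain rfl : x = w := hxy
      exact (hex hy hx).elim
    · exact congrArg some hxy
  · intro o ho
    obtain ⟨h1, h2, h3, h4, h5⟩ := (hmem o).1 ho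
    rw [link_mem_iff hL]
    refine ⟨h1.image _, ?_, ?_⟩
    · rw [Finset.disjoint_left] at h2 ⊢
      intro x hx
      obtain ⟨_ | y, hy, rfl⟩ := Finset.mem_image.1 hx
      · exact hwσ
      · exact h2 (Finset.mem_eraseNone.2 hy)
    · by_cases hn : none ∈ o
      · refine hL.2 _ (h4 hn) _ ?_ ((h1.image _).mono Finset.subset_union_left)
        intro x hx
        rcases Finset.mem_union.1 hx with hx | hx
        · obtain ⟨_ | y, hy, rfl⟩ := Finset.mem_image.1 hx
          · simp [hwe]
          · simp [hy]
        · simp [hx]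
      · have : o.image (fun o => o.getD w) = Finset.eraseNone o := by
          ext x
          rw [Finset.mem_image, Finset.mem_eraseNone]
          constructor
          · rintro ⟨_ | y, hy, rfl⟩
            · exact absurd hy hn
            · exact hy
          · exact fun h => ⟨_, h, rfl⟩
        rw [this]
        exact h5 hn
  · intro t ht
    obtain ⟨h1, h2, h3⟩ := (link_mem_iff hL).1 ht
    by_cases he : e ⊆ t ∪ σ
    · have hwt : w ∈ t := (Finset.mem_union.1 (he hwe)).resolve_right hwσ
      have h : Finset.eraseNone (insert none ((t.erase w).image some)) = t.erase w := by
        ext; simp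
      refine ⟨insert none ((t.erase w).image some), ?_, ?_⟩
      · rw [hmem, h]
        refine ⟨Finset.insert_nonempty _ _,
          Finset.disjoint_of_subset_left (Finset.erase_subset _ _) h2, ?_, fun _ => ?_,
          fun hn => by simp at hn⟩
        · intro h'
          have := h' hwe
          simp [hwσ] at this
        · refine hL.2 _ h3 _ ?_ ((hL.1 _ heL).mono Finset.subset_union_right)
          exact Finset.union_subset
            (Finset.union_subset_union_left (Finset.erase_subset _ _)) he
      · ext x
        by_cases hx : x = w
        · simp [hx, hwt]
        · simp [hx]
    · refine ⟨t.image some, ?_, ?_⟩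
      · rw [hmem, eraseNone_image_some']
        exact ⟨h1.image _, h2, he, fun hn => by simp at hn, fun _ => h3⟩
      · ext x
        simp

/-! ### The four cases -/

/-- Lemma `l:subcases` of the paper: links of simplices in an
edge subdivision `Sub_e(L)`, for an edge `e = {v⁺, v⁻}` of `L`:
(1) if `σ ∈ Lk_L e` then `Lk_{Sub_e L} σ = Sub_e (Lk_L σ)`;
(2) if `σ = {v_e} ∪ τ` (with `τ ∈ Lk_L e` or `τ = ∅`) then
    `Lk_{Sub_e L} σ` is the join of the two-point complex `{v⁺, v⁻}` with
    `Lk_L (e ∪ τ)`;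
(3) if `σ = {v_e, v^±} ∪ τ` then `Lk_{Sub_e L} σ = Lk_L (e ∪ τ)`;
(4) for every other simplex `σ` of `Sub_e(L)` (a simplex of `L` not in `Lk_L e`),
    `Lk_{Sub_e L} σ ≅ Lk_L σ`. -/
theorem link_subdiv
    {V : Type} [Fintype V] (L : SCplx V) (hL : IsComplex L)
    (v₁ v₂ : V) (hne : v₁ ≠ v₂) (e : Finset V) (he : e = {v₁, v₂}) (heL : e ∈ L) :
    (∀ σ ∈ link L e,
      link (subdiv L e) (σ.image some) = subdiv (link L σ) e) ∧
    (∀ τ : Finset V, (τ = ∅ ∨ τ ∈ link L e) →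
      link (subdiv L e) (insert none (τ.image some)) =
        joinIn (twoPt v₁ v₂) (mapC some (link L (e ∪ τ)))) ∧
    (∀ τ : Finset V, (τ = ∅ ∨ τ ∈ link L e) → ∀ v ∈ e,
      link (subdiv L e) (insert none (insert (some v) (τ.image some))) =
        mapC some (link L (e ∪ τ))) ∧
    (∀ σ ∈ L, ¬ e ⊆ σ → σ ∉ link L e →
      Isom (link (subdiv L e) (σ.image some)) (link L σ)) := by
  refine ⟨fun σ hσ => ?_, fun τ hτ => ?_, fun τ hτ v hv => ?_, fun σ hσ hes hσl => ?_⟩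
  · have heσ : e ∈ link L σ := ⟨heL, hσ.2.1.symm, by rw [Finset.union_comm]; exact hσ.2.2⟩
    have hd := hσ.2.1
    have hes : ∀ s, e ⊆ s ∪ σ ↔ e ⊆ s := fun s =>
      ⟨fun h => Disjoint.left_le_of_le_sup_right h hd.symm,
        fun h => h.trans Finset.subset_union_left⟩
    ext o
    rw [mem_link_subdiv_iff hL heL, mem_subdiv_iff_s7 (isComplex_link hL σ) heσ,
      eraseNone_image_some', disjoint_image_some_iff]
    unfold SubdivCond
    rw [link_mem_iff hL, link_mem_iff hL, hes, Finset.disjoint_union_left,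
      Finset.union_right_comm]
    have hn : none ∉ σ.image some := by simp
    have hen : (Finset.eraseNone o ∪ e).Nonempty := (hL.1 _ heL).mono Finset.subset_union_right
    have h1 : none ∈ o → o.Nonempty := fun h => ⟨_, h⟩
    have h2 : none ∉ o → (o.Nonempty ↔ (Finset.eraseNone o).Nonempty) := fun h => by
      rw [← Finset.image_nonempty (s := Finset.eraseNone o) (f := some),
        image_some_eraseNone' h]
    have := hd.symm
    tauto
  · ext o
    rw [mem_link_insert_none hL heL]
    have hτe : Disjoint τ e := by
      rcases hτ with rfl | hτ
      · simp
      · exact hτ.2.1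
    constructor
    · rintro ⟨s, h1, h2, h3, h4, rfl⟩
      refine ⟨(s ∩ e).image some, (s \ e).image some, ?_, ?_, h1.image _, ?_⟩
      · simp only [twoPt, Set.mem_ofPred_eq]
        subst he
        by_cases hv1 : v₁ ∈ s <;> by_cases hv2 : v₂ ∈ s
        · exact absurd (by grind) h3
        · right; left; ext (_ | x) <;> simp; grind
        · right; right; ext (_ | x) <;> simp; grind
        · left; ext (_ | x) <;> simp; grind
      · rcases Finset.eq_empty_or_nonempty (s \ e) with h | h
        · left; simp [h]
        · right
          refine mem_mapC_some.2 ⟨_, (link_mem_iff hL).2 ⟨h, ?_, ?_⟩, rfl⟩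
          · rw [Finset.disjoint_left] at *; grind
          · convert h4 using 1; grind
      · ext (_ | x) <;> simp; tauto
    · rintro ⟨s₁, s₂, h1, h2, h3, rfl⟩
      have h1' : ∃ t₁ : Finset V, t₁ ⊂ e ∧ t₁.image some = s₁ := by
        rcases h1 with rfl | rfl | rfl
        · exact ⟨∅, Finset.empty_ssubset.2 (hL.1 _ heL), by simp⟩
        · refine ⟨{v₁}, ?_, by simp⟩
          rw [he, Finset.ssubset_iff_of_subset (by simp)]
          exact ⟨v₂, by simp, by simpa using hne.symm⟩
        · refine ⟨{v₂}, ?_, by simp⟩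
          rw [he, Finset.ssubset_iff_of_subset (by simp)]
          exact ⟨v₁, by simp, by simpa using hne⟩
      have h2' : ∃ t₂ : Finset V, Disjoint t₂ (e ∪ τ) ∧ t₂ ∪ (e ∪ τ) ∈ L ∧
          t₂.image some = s₂ := by
        rw [mem_mapC_some] at h2
        rcases h2 with rfl | ⟨t, ht, rfl⟩
        · refine ⟨∅, by simp, ?_, by simp⟩
          rw [Finset.empty_union]
          rcases hτ with rfl | hτ
          · simpa using heL
          · rw [Finset.union_comm]; exact hτ.2.2
        · exact ⟨t, ht.2.1, ht.2.2, rfl⟩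
      obtain ⟨t₁, ht₁, rfl⟩ := h1'
      obtain ⟨t₂, hd₂, ht₂, rfl⟩ := h2'
      have hsub := ht₁.1
      refine ⟨t₁ ∪ t₂, ?_, ?_, ?_, ?_, by ext (_ | x) <;> simp⟩
      · obtain ⟨x, hx⟩ := h3
        have hx' : x ∈ t₁.image some ∨ x ∈ t₂.image some := by simpa using hx
        rcases hx' with hx | hx <;> obtain ⟨y, hy, -⟩ := Finset.mem_image.1 hx
        · exact ⟨y, Finset.mem_union_left _ hy⟩
        · exact ⟨y, Finset.mem_union_right _ hy⟩
      · rw [Finset.disjoint_left] at *; grind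
      · intro h
        refine ht₁.2 ?_
        rw [Finset.disjoint_left] at *; grind
      · convert ht₂ using 1; grind
  · ext o
    rw [← Finset.image_insert, mem_link_insert_none hL heL, mem_mapC_some]
    have hτe : Disjoint τ e := by
      rcases hτ with rfl | hτ
      · simp
      · exact hτ.2.1
    rw [Finset.disjoint_left] at hτe
    constructor
    · rintro ⟨s, h1, h2, h3, h4, rfl⟩
      refine ⟨s, (link_mem_iff hL).2 ⟨h1, ?_, ?_⟩, rfl⟩
      · rw [Finset.disjoint_left] at *
        subst he
        grind
      · convert h4 using 1; grind
    · rintro ⟨s, hs, rfl⟩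
      obtain ⟨h1, h2, h3⟩ := (link_mem_iff hL).1 hs
      refine ⟨s, h1, ?_, ?_, ?_, rfl⟩
      · rw [Finset.disjoint_left] at *; grind
      · rw [Finset.disjoint_left] at *; grind
      · convert h3 using 1; grind
  · obtain ⟨w, hwe, hwσ⟩ := Finset.not_subset.1 hes
    refine isom_link_subdiv hL heL hwe hwσ fun hσe x hx => ?_
    have hnd : ¬ Disjoint σ e := fun h => hσl ⟨hσ, h, hσe⟩
    obtain ⟨y, hyσ, hye⟩ := Finset.not_disjoint_iff.1 hnd
    have hyw : y ≠ w := fun h => hwσ (h ▸ hyσ)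
    subst he
    grind
end
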